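/- Let G be a bridgeless graph in G_{n,n+k} with n ≥ 1 and k ≥ 1. Then: (a) G has a weak distillation in D_k if and only if all 2-bonds of G are trivial; (b) G is equivalent to some graph G† which has a weak distillation D ∈ D_k; (c) if G does not have a weak distillation in D_k, then any graph G† as in (b) is imbalanced and has at least one chain of length zero with respect to each of its weak distillations in D_k. -/

import Mathlib

open Classical Finset

noncomputable section

/-- A finite multigraph: edges carry two (possibly equal) endpoints. -/
structure Multigraph where
  V : Type
  E : Type
  [fintV : Fintype V]
  [fintE : Fintype E]
  src : E → V
  tgt : E → V

attribute [instance] Multigraph.fintV Multigraph.fintE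

namespace Multigraph

variable (G : Multigraph)

/-- Number of vertices. -/
def nV : ℕ := Fintype.card G.V

/-- Number of edges (with multiplicity). -/
def nE : ℕ := Fintype.card G.E

/-- One step along an edge belonging to the edge set `S`. -/
def stepOn (S : Finset G.E) (u v : G.V) : Prop :=
  ∃ e ∈ S, (G.src e = u ∧ G.tgt e = v) ∨ (G.src e = v ∧ G.tgt e = u)

/-- The spanning subgraph with edge set `S` is connected. -/
def ConnOn (S : Finset G.E) : Prop :=
  ∀ u v : G.V, Relation.ReflTransGen (G.stepOn S) u v

/-- `G` is connected. -/
def Connected : Prop := G.ConnOn Finset.univ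

/-- The edge set `F` disconnects `G` (i.e. is a disconnection). -/
def Disconnects (F : Finset G.E) : Prop := ¬ G.ConnOn (Finset.univ \ F)

/-- `d i G`: the number of `i`-disconnections of `G`. -/
def d (i : ℕ) : ℕ :=
  ((Finset.univ : Finset (Finset G.E)).filter fun F => F.card = i ∧ G.Disconnects F).card

/-- The all-terminal reliability `R(G,p)`: each edge is independently retained with
probability `p`; this is the probability that the retained spanning subgraph is connected. -/
def rel (p : ℝ) : ℝ :=
  ∑ S : Finset G.E, if G.ConnOn S then p ^ S.card * (1 - p) ^ (G.nE - S.card) else 0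

/-- `e` is a bridge. -/
def IsBridge (e : G.E) : Prop := G.Disconnects {e}

def Bridgeless : Prop := ∀ e : G.E, ¬ G.IsBridge e

/-- The number of spanning trees of `G` (connected spanning subgraphs with `nV - 1` edges). -/
def treeCount : ℕ :=
  ((Finset.univ : Finset (Finset G.E)).filter fun S => S.card + 1 = G.nV ∧ G.ConnOn S).card

/-- The edge-connectivity: the least size of a disconnecting set of edges. -/
def edgeConnectivity : ℕ :=
  sInf {i : ℕ | ∃ F : Finset G.E, F.card = i ∧ G.Disconnects F}

/-- Degree of a vertex (a loop counts twice). -/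
def deg (v : G.V) : ℕ :=
  (Finset.univ.filter fun e => G.src e = v).card +
    (Finset.univ.filter fun e => G.tgt e = v).card

/-- The edges crossing the vertex set `A`. -/
def cutEdges (A : Finset G.V) : Finset G.E :=
  Finset.univ.filter fun e =>
    (G.src e ∈ A ∧ G.tgt e ∉ A) ∨ (G.src e ∉ A ∧ G.tgt e ∈ A)

/-- `F` is a cut: the set of edges crossing a nontrivial bipartition of the vertices. -/
def IsCut (F : Finset G.E) : Prop :=
  ∃ A : Finset G.V, A.Nonempty ∧ A ≠ Finset.univ ∧ F = G.cutEdges A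

/-- `F` is a bond: a minimal cut. -/
def IsBond (F : Finset G.E) : Prop :=
  G.IsCut F ∧ ∀ F' ⊆ F, G.IsCut F' → F' = F

/-- Number of `s`-bonds of `G`. -/
def bondCount (s : ℕ) : ℕ :=
  ((Finset.univ : Finset (Finset G.E)).filter fun F => F.card = s ∧ G.IsBond F).card

/-- Adjacency of vertices. -/
def Adj (u v : G.V) : Prop :=
  ∃ e : G.E, (G.src e = u ∧ G.tgt e = v) ∨ (G.src e = v ∧ G.tgt e = u)

/-- `G` is simple: no loops and no parallel edges. -/
def IsSimple : Prop :=
  (∀ e : G.E, G.src e ≠ G.tgt e) ∧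
    ∀ e f : G.E,
      ((G.src e = G.src f ∧ G.tgt e = G.tgt f) ∨ (G.src e = G.tgt f ∧ G.tgt e = G.src f)) →
        e = f

end Multigraph

/-- `G ∈ 𝒢_{n,m}`: connected with `n` vertices and `m` edges. -/
def memG (G : Multigraph) (n m : ℕ) : Prop :=
  G.nV = n ∧ G.nE = m ∧ G.Connected

/-- Isomorphism of multigraphs. -/
structure MGIso (G H : Multigraph) where
  vMap : G.V ≃ H.V
  eMap : G.E ≃ H.E
  ends_eq : ∀ e : G.E,
    (H.src (eMap e) = vMap (G.src e) ∧ H.tgt (eMap e) = vMap (G.tgt e)) ∨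
    (H.src (eMap e) = vMap (G.tgt e) ∧ H.tgt (eMap e) = vMap (G.src e))

def IsIso (G H : Multigraph) : Prop := Nonempty (MGIso G H)

/-- `G` is `p`-optimal in `𝒢_{n,m}`. -/
def pOptimal (G : Multigraph) (n m : ℕ) (p : ℝ) : Prop :=
  memG G n m ∧ ∀ H : Multigraph, memG H n m → H.rel p ≤ G.rel p

/-- `G` is uniquely optimal in `𝒢_{n,m}`: strictly more reliable than every
non-isomorphic member, for every `p ∈ (0,1)`. -/
def UniquelyOptimal (G : Multigraph) (n m : ℕ) : Prop :=
  memG G n m ∧ ∀ H : Multigraph, memG H n m → ¬ IsIso G H →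
    ∀ p : ℝ, 0 < p → p < 1 → H.rel p < G.rel p

noncomputable instance quotFintype {α : Type} [Fintype α] {r : α → α → Prop} :
    Fintype (Quot r) :=
  letI := Classical.decEq (Quot r)
  Fintype.ofSurjective (Quot.mk r) fun q => Quot.exists_rep q

/-- Identification of the endpoints of zero-weight edges. -/
def zeroRel (D : Multigraph) (w : D.E → ℕ) : D.V → D.V → Prop :=
  fun u v => ∃ e : D.E, w e = 0 ∧ D.src e = u ∧ D.tgt e = v

/-- The `j`-th node along the chain replacing the edge `e` (whose chain has `w e` edges). -/
def chainNode (D : Multigraph) (w : D.E → ℕ) (e : D.E) (j : ℕ) :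
    Quot (zeroRel D w) ⊕ (Σ f : D.E, Fin (w f - 1)) :=
  if h : 0 < j ∧ j < w e then Sum.inr ⟨e, ⟨j - 1, by omega⟩⟩
  else if j = 0 then Sum.inl (Quot.mk _ (D.src e))
  else Sum.inl (Quot.mk _ (D.tgt e))

/-- The weak subdivision of `D` determined by the chain lengths `w`: each edge `e` is
replaced by a chain with `w e` edges; zero-weight edges are contracted. -/
def subdivide (D : Multigraph) (w : D.E → ℕ) : Multigraph where
  V := Quot (zeroRel D w) ⊕ (Σ f : D.E, Fin (w f - 1))
  E := Σ f : D.E, Fin (w f)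
  src f := chainNode D w f.1 f.2.val
  tgt f := chainNode D w f.1 (f.2.val + 1)

/-- The zero-weight edges contain no cycle (no "zero cycle"): they form a forest. -/
def ZeroAcyclic (D : Multigraph) (w : D.E → ℕ) : Prop :=
  Fintype.card (Quot (zeroRel D w)) +
      (Finset.univ.filter fun e : D.E => w e = 0).card = Fintype.card D.V

/-- `G` is a weak subdivision of `D` with chain lengths `w`. -/
def IsWeakSubdivision (G D : Multigraph) (w : D.E → ℕ) : Prop :=
  ZeroAcyclic D w ∧ IsIso G (subdivide D w)

/-- `D` is a weak distillation of `G`. -/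
def IsWeakDistillation (D G : Multigraph) : Prop :=
  ∃ w : D.E → ℕ, IsWeakSubdivision G D w

/-- The chain lengths differ pairwise by at most one. -/
def BalancedWeights {E : Type} (w : E → ℕ) : Prop := ∀ e f : E, w e ≤ w f + 1

/-- `D ∈ 𝒟_k`: connected, cubic, 3-edge-connected, of exceedance `k`. -/
def memDk (k : ℕ) (D : Multigraph) : Prop :=
  D.Connected ∧ (∀ v : D.V, D.deg v = 3) ∧
    (∀ F : Finset D.E, D.Disconnects F → 3 ≤ F.card) ∧ D.nE = D.nV + k

/-- Identification of the two endpoints of the edge `e`. -/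
def contractRel (G : Multigraph) (e : G.E) : G.V → G.V → Prop :=
  fun u v => u = G.src e ∧ v = G.tgt e

/-- Contraction of the edge `e`. -/
def Multigraph.contract (G : Multigraph) (e : G.E) : Multigraph :=
  letI := Classical.decEq G.E
  { V := Quot (contractRel G e)
    E := {f : G.E // f ≠ e}
    src := fun f => Quot.mk _ (G.src f.1)
    tgt := fun f => Quot.mk _ (G.tgt f.1) }

/-- `G'` is obtained from `G` by shifting an edge: in an intermediate graph `H`
(the expansion of `G` at a vertex by the new edge `e'`), the edges `e, e'` form a
2-bond; contracting `e'` gives back `G`, while contracting `e` gives `G'`. -/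
def IsShiftOf (G G' : Multigraph) : Prop :=
  ∃ (H : Multigraph) (e e' : H.E), e ≠ e' ∧
    H.src e ≠ H.tgt e ∧ H.src e' ≠ H.tgt e' ∧
    H.IsBond {e, e'} ∧
    IsIso (H.contract e') G ∧ IsIso (H.contract e) G'

/-- Equivalence of graphs: repeated edge shifting. -/
def EquivalentGraphs (G G' : Multigraph) : Prop :=
  Relation.ReflTransGen IsShiftOf G G'

/-- `G'` is obtained from `G` by moving the (non-loop) edge `e`: contracting `e` and
expanding a new edge, identified with `e` via `φ`, at an arbitrary vertex.
Equivalently, `G/e` and `G'/φ e` agree, compatibly with the edge identification `φ`. -/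
def MovedEdge (G G' : Multigraph) (φ : G.E ≃ G'.E) (e : G.E) : Prop :=
  G.src e ≠ G.tgt e ∧ G'.src (φ e) ≠ G'.tgt (φ e) ∧
  ∃ ψ : Quot (contractRel G e) ≃ Quot (contractRel G' (φ e)),
    ∀ f : G.E, f ≠ e →
      ((ψ (Quot.mk _ (G.src f)) = Quot.mk _ (G'.src (φ f)) ∧
        ψ (Quot.mk _ (G.tgt f)) = Quot.mk _ (G'.tgt (φ f))) ∨
       (ψ (Quot.mk _ (G.src f)) = Quot.mk _ (G'.tgt (φ f)) ∧
        ψ (Quot.mk _ (G.tgt f)) = Quot.mk _ (G'.src (φ f))))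

/-- Move one edge from the chain `a` to the chain `b`. -/
def moveWeight {E : Type} (w : E → ℕ) (a b : E) : E → ℕ :=
  fun g => if g = b then w b + 1 else if g = a then w a - 1 else w g

/-- The chains of maximal length. -/
def maxChains (D : Multigraph) (w : D.E → ℕ) : Finset D.E :=
  Finset.univ.filter fun e => ∀ f : D.E, w f ≤ w e

/-- The chains of minimal length. -/
def minChains (D : Multigraph) (w : D.E → ℕ) : Finset D.E :=
  Finset.univ.filter fun e => ∀ f : D.E, w e ≤ w f

/-- Degree of `v` within the edge set `S`. -/
def degIn (D : Multigraph) (S : Finset D.E) (v : D.V) : ℕ :=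
  (S.filter fun e => D.src e = v).card + (S.filter fun e => D.tgt e = v).card

/-- `S` is a matching (pairwise non-adjacent edges). -/
def IsMatchingIn (D : Multigraph) (S : Finset D.E) : Prop := ∀ v : D.V, degIn D S v ≤ 1

/-- `S` is a path with three edges. -/
def IsPath3In (D : Multigraph) (S : Finset D.E) : Prop :=
  S.card = 3 ∧ (∀ v : D.V, degIn D S v ≤ 2) ∧
    (Finset.univ.filter fun v : D.V => degIn D S v = 1).card = 2

/-- `S` is the disjoint union of a path with three edges and a single edge. -/
def IsPath3PlusEdgeIn (D : Multigraph) (S : Finset D.E) : Prop :=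
  S.card = 4 ∧ (∀ v : D.V, degIn D S v ≤ 2) ∧
    (Finset.univ.filter fun v : D.V => degIn D S v = 1).card = 4 ∧
    ∃ e ∈ S, degIn D S (D.src e) = 2 ∧ degIn D S (D.tgt e) = 2

/-- `S` is the disjoint union of two paths with two edges each. -/
def IsTwoPlusTwoIn (D : Multigraph) (S : Finset D.E) : Prop :=
  S.card = 4 ∧ (∀ v : D.V, degIn D S v ≤ 2) ∧
    (Finset.univ.filter fun v : D.V => degIn D S v = 1).card = 4 ∧
    ∀ e ∈ S, degIn D S (D.src e) = 1 ∨ degIn D S (D.tgt e) = 1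

/-- Two edges sharing a vertex. -/
def AdjEdges (D : Multigraph) (a b : D.E) : Prop :=
  ∃ v : D.V, (D.src a = v ∨ D.tgt a = v) ∧ (D.src b = v ∨ D.tgt b = v)

/-- The number of incidences of edges of weight `c` at the vertex `u`. -/
def incCount (D : Multigraph) (w : D.E → ℕ) (u : D.V) (c : ℕ) : ℕ :=
  (Finset.univ.filter fun e : D.E => D.src e = u ∧ w e = c).card +
    (Finset.univ.filter fun e : D.E => D.tgt e = u ∧ w e = c).card

/-- The `π^v`-value of the vertex `u`: the number of incident edges of weight `q + 1`
minus the number of incident edges of weight `q - 1`. -/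
def piV (D : Multigraph) (w : D.E → ℕ) (q : ℕ) (u : D.V) : ℤ :=
  (incCount D w u (q + 1) : ℤ) -
    (if q = 0 then 0 else (incCount D w u (q - 1) : ℤ))

/-- The `π^v`-values are balanced: pairwise differences at most one. -/
def BalancedPiV (D : Multigraph) (w : D.E → ℕ) (q : ℕ) : Prop :=
  ∀ u v : D.V, piV D w q u ≤ piV D w q v + 1

/-- The standard weight `q`, where `m = 3kq + r` with `-3k/2 < r ≤ 3k/2`. -/
def stdWeight (m k : ℕ) : ℕ := (2 * m + 3 * k - 1) / (6 * k)

/-- `w` is a balanced weighting of `D` of total size `m` (the implied weak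
subdivision is the generic member of `ℬ_m(D)`). -/
def IsBalancedWeighting (D : Multigraph) (w : D.E → ℕ) (m : ℕ) : Prop :=
  (∑ e : D.E, w e) = m ∧ BalancedWeights w ∧ ZeroAcyclic D w

/-- Every 3-bond of `D` is trivial (consists of the three edges at a single vertex). -/
def OnlyTrivialThreeBonds (D : Multigraph) : Prop :=
  ∀ F : Finset D.E, D.IsBond F → F.card = 3 →
    ∃ u : D.V, F = Finset.univ.filter fun e => D.src e = u ∨ D.tgt e = u

/-- The 3-dipole: two vertices joined by three parallel edges. -/
def dipole3 : Multigraph where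
  V := Fin 2
  E := Fin 3
  src _ := 0
  tgt _ := 1

/-- The complete graph `K₄`. -/
def K4 : Multigraph where
  V := Fin 4
  E := {p : Fin 4 × Fin 4 // p.1 < p.2}
  src p := p.1.1
  tgt p := p.1.2

/-- The complete bipartite graph `K_{3,3}`. -/
def K33 : Multigraph where
  V := Fin 3 ⊕ Fin 3
  E := Fin 3 × Fin 3
  src p := Sum.inl p.1
  tgt p := Sum.inr p.2

/-- The triangular prism `Π₃`; the edges `Sum.inr i` are the rungs. -/
def prism : Multigraph where
  V := Fin 3 × Bool
  E := (Fin 3 × Bool) ⊕ Fin 3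
  src := fun e => match e with
    | Sum.inl (i, b) => (i, b)
    | Sum.inr i => (i, false)
  tgt := fun e => match e with
    | Sum.inl (i, b) => (i + 1, b)
    | Sum.inr i => (i, true)

/-- The Wagner graph (the 4-Möbius ladder): the edges `Sum.inl i` are the rails
(the 8-cycle) and the edges `Sum.inr j` are the rungs. -/
def wagner : Multigraph where
  V := Fin 8
  E := Fin 8 ⊕ Fin 4
  src := fun e => match e with
    | Sum.inl i => i
    | Sum.inr j => ⟨j.val, by omega⟩
  tgt := fun e => match e with
    | Sum.inl i => i + 1
    | Sum.inr j => ⟨j.val + 4, by omega⟩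

/-- The Petersen graph. -/
def petersen : Multigraph where
  V := Fin 5 × Bool
  E := Fin 5 ⊕ Fin 5 ⊕ Fin 5
  src := fun e => match e with
    | Sum.inl i => (i, false)
    | Sum.inr (Sum.inl i) => (i, false)
    | Sum.inr (Sum.inr i) => (i, true)
  tgt := fun e => match e with
    | Sum.inl i => (i + 1, false)
    | Sum.inr (Sum.inl i) => (i, true)
    | Sum.inr (Sum.inr i) => (i + 2, true)

namespace BG
open Multigraph

def EC (G : Multigraph) (j : ℕ) : Prop :=
  ∀ A : Finset G.V, A.Nonempty → A ≠ univ → j ≤ (G.cutEdges A).card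

def ends (G : Multigraph) (e : G.E) : Sym2 G.V := s(G.src e, G.tgt e)

lemma mem_cut {G : Multigraph} {A : Finset G.V} {e : G.E} :
    e ∈ G.cutEdges A ↔ ¬ (G.src e ∈ A ↔ G.tgt e ∈ A) := by
  simp only [cutEdges, mem_filter, mem_univ, true_and]; tauto

lemma mem_cut_ends {G : Multigraph} {A : Finset G.V} {e : G.E} {u v : G.V}
    (h : ends G e = s(u, v)) : e ∈ G.cutEdges A ↔ ¬ (u ∈ A ↔ v ∈ A) := by
  rw [mem_cut]
  simp only [ends, Sym2.eq_iff] at h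
  rcases h with ⟨rfl, rfl⟩ | ⟨rfl, rfl⟩ <;> tauto

lemma cut_nontriv {G : Multigraph} {A : Finset G.V} (h : (G.cutEdges A).Nonempty) :
    A.Nonempty ∧ A ≠ univ := by
  obtain ⟨e, he⟩ := h
  rw [mem_cut] at he
  constructor
  · by_contra h; rw [not_nonempty_iff_eq_empty] at h; subst h; simp at he
  · rintro rfl; simp at he

lemma cut_compl {G : Multigraph} (A : Finset G.V) : G.cutEdges Aᶜ = G.cutEdges A := by
  ext e; simp only [mem_cut, mem_compl]; tauto

lemma cut_symm {G : Multigraph} (A B : Finset G.V) (e : G.E) :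
    e ∈ G.cutEdges (symmDiff A B) ↔ ¬ (e ∈ G.cutEdges A ↔ e ∈ G.cutEdges B) := by
  simp only [mem_cut, mem_symmDiff]; tauto

lemma cut_submod {G : Multigraph} (A B : Finset G.V) :
    (G.cutEdges (A ∩ B)).card + (G.cutEdges (A ∪ B)).card ≤
      (G.cutEdges A).card + (G.cutEdges B).card := by
  simp only [cutEdges, card_filter, ← Finset.sum_add_distrib]
  apply Finset.sum_le_sum
  intro e _
  by_cases h1 : G.src e ∈ A <;> by_cases h2 : G.src e ∈ B <;>
    by_cases h3 : G.tgt e ∈ A <;> by_cases h4 : G.tgt e ∈ B <;> simp [h1, h2, h3, h4]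

lemma connOn_iff {G : Multigraph} (S : Finset G.E) :
    G.ConnOn S ↔ ∀ A : Finset G.V, A.Nonempty → A ≠ univ → ∃ e ∈ S, e ∈ G.cutEdges A := by
  constructor
  · rintro h A ⟨u, hu⟩ hA
    by_contra hc
    push Not at hc
    apply hA
    ext v
    simp only [mem_univ, iff_true]
    induction h u v with
    | refl => exact hu
    | tail _ hs ih =>
      obtain ⟨e, heS, he⟩ := hs
      have := hc e heS
      rw [mem_cut] at this
      rcases he with ⟨h1, h2⟩ | ⟨h1, h2⟩ <;> rw [h1, h2] at this <;> tauto
  · intro h u v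
    by_contra hv
    obtain ⟨e, heS, he⟩ := h (univ.filter fun x => Relation.ReflTransGen (G.stepOn S) u x)
      ⟨u, by simp; exact Relation.ReflTransGen.refl⟩
      (by intro h; apply hv; have := mem_univ v; rw [← h] at this; simpa using this)
    rw [mem_cut] at he
    simp only [mem_filter, mem_univ, true_and] at he
    apply he
    constructor
    · intro h1; exact h1.tail ⟨e, heS, Or.inl ⟨rfl, rfl⟩⟩
    · intro h1; exact h1.tail ⟨e, heS, Or.inr ⟨rfl, rfl⟩⟩

lemma disc_iff {G : Multigraph} (F : Finset G.E) :
    G.Disconnects F ↔ ∃ A : Finset G.V, A.Nonempty ∧ A ≠ univ ∧ G.cutEdges A ⊆ F := by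
  rw [Disconnects, connOn_iff]
  push Not
  constructor
  · rintro ⟨A, h1, h2, h3⟩
    refine ⟨A, h1, h2, fun e he => ?_⟩
    by_contra hF
    exact h3 e (by simp [hF]) he
  · rintro ⟨A, h1, h2, h3⟩
    refine ⟨A, h1, h2, fun e he hc => ?_⟩
    simp at he
    exact he (h3 hc)

lemma ec2_of {G : Multigraph} (hc : G.Connected) (hb : G.Bridgeless) : EC G 2 := by
  intro A h1 h2
  by_contra h
  have h3 : (G.cutEdges A).card ≤ 1 := by omega
  obtain ⟨e, _, he⟩ := (connOn_iff _).1 hc A h1 h2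
  apply hb e
  rw [IsBridge, disc_iff]
  refine ⟨A, h1, h2, fun f hf => ?_⟩
  rw [mem_singleton]
  exact card_le_one.1 h3 f hf e he

lemma conn_of {G : Multigraph} {j : ℕ} (h : EC G (j+1)) : G.Connected := by
  rw [Connected, connOn_iff]
  intro A h1 h2
  have := h A h1 h2
  obtain ⟨e, he⟩ := card_pos.1 (by omega : 0 < (G.cutEdges A).card)
  exact ⟨e, mem_univ _, he⟩

lemma ec3_iff {G : Multigraph} :
    EC G 3 ↔ ∀ F : Finset G.E, G.Disconnects F → 3 ≤ F.card := by
  constructor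
  · intro h F hF
    obtain ⟨A, h1, h2, h3⟩ := (disc_iff F).1 hF
    exact (h A h1 h2).trans (card_le_card h3)
  · intro h A h1 h2
    exact h _ ((disc_iff _).2 ⟨A, h1, h2, Subset.rfl⟩)

lemma bond_of {G : Multigraph} (h : EC G 2) {A : Finset G.V} (hA : (G.cutEdges A).card = 2) :
    G.IsBond (G.cutEdges A) := by
  obtain ⟨h1, h2⟩ := cut_nontriv (card_pos.1 (by omega : 0 < (G.cutEdges A).card))
  refine ⟨⟨A, h1, h2, rfl⟩, ?_⟩
  rintro F' hF' ⟨B, h3, h4, rfl⟩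
  exact eq_of_subset_of_card_le hF' (by rw [hA]; exact h B h3 h4)

def Triv2 (G : Multigraph) : Prop :=
  ∀ A : Finset G.V, (G.cutEdges A).card = 2 →
    ∃ B : Finset G.V, G.cutEdges B = G.cutEdges A ∧ ∀ v ∈ B, G.deg v = 2

lemma triv2_iff {G : Multigraph} (h : EC G 2) :
    Triv2 G ↔ (∀ F : Finset G.E, G.IsBond F → F.card = 2 →
        ∃ A : Finset G.V, A.Nonempty ∧ A ≠ Finset.univ ∧ F = G.cutEdges A ∧
          ∀ v ∈ A, G.deg v = 2) := by
  constructor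
  · rintro ht F ⟨⟨A, h1, h2, rfl⟩, h3⟩ hF
    obtain ⟨B, hB, hd⟩ := ht A hF
    obtain ⟨h4, h5⟩ := cut_nontriv (G := G) (A := B) (card_pos.1 (by rw [hB]; omega))
    exact ⟨B, h4, h5, hB.symm, hd⟩
  · intro ht A hA
    obtain ⟨B, _, _, h3, h4⟩ := ht _ (bond_of h hA) hA
    exact ⟨B, h3.symm, h4⟩

/-- handshake -/
lemma handshake (G : Multigraph) : ∑ v, G.deg v = 2 * G.nE := by
  simp only [deg, Finset.sum_add_distrib]
  rw [← card_eq_sum_card_fiberwise (f := G.src) (s := univ) (t := univ) (by simp),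
    ← card_eq_sum_card_fiberwise (f := G.tgt) (s := univ) (t := univ) (by simp), nE, card_univ]
  ring

lemma cut_single_le (G : Multigraph) (v : G.V) : (G.cutEdges {v}).card ≤ G.deg v := by
  rw [deg]
  refine le_trans (card_le_card ?_) (card_union_le _ _)
  intro e he
  simp only [mem_cut, mem_singleton] at he
  simp only [mem_union, mem_filter, mem_univ, true_and]
  tauto

lemma deg_ge {G : Multigraph} {j : ℕ} (h : EC G j) {u v : G.V} (huv : u ≠ v) : j ≤ G.deg v := by
  refine le_trans (h {v} (by simp) ?_) (cut_single_le G v)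
  intro hu
  have := mem_univ u
  rw [← hu] at this
  exact huv (by simpa using this)

lemma single_univ {G : Multigraph} {v : G.V} (h : ∀ u, u = v) : G.deg v = 2 * G.nE ∧ G.nV = 1 := by
  have hu : (univ : Finset G.V) = {v} := by ext u; simp [h u]
  constructor
  · rw [← handshake, hu]; simp
  · rw [nV, ← card_univ, hu]; simp

end BG

namespace BG
open Multigraph

structure Con (H : Multigraph) (R : Set H.E) (X : Multigraph) where
  p : H.V → X.V
  r : X.E → H.E
  psurj : Function.Surjective p
  rinj : Function.Injective r
  rnot : ∀ x, r x ∉ R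
  rsurj : ∀ g, g ∉ R → ∃ x, r x = g
  coll : ∀ g ∈ R, p (H.src g) = p (H.tgt g)
  ker : ∀ u v, p u = p v → ∀ S : H.V → Prop, (∀ g ∈ R, S (H.src g) ↔ S (H.tgt g)) → (S u ↔ S v)
  hends : ∀ x, (ends H (r x)).map p = ends X x

namespace Con
variable {H X Y : Multigraph} {R : Set H.E}

def refl (H : Multigraph) : Con H ∅ H where
  p := id
  r := id
  psurj := Function.surjective_id
  rinj := Function.injective_id
  rnot := by simp
  rsurj := fun g _ => ⟨g, rfl⟩
  coll := by simp
  ker := by rintro u v h S -; simp at h; rw [h]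
  hends := by simp

def comp (c : Con H R X) {T : Set X.E} (d : Con X T Y) : Con H (R ∪ c.r '' T) Y where
  p := d.p ∘ c.p
  r := c.r ∘ d.r
  psurj := d.psurj.comp c.psurj
  rinj := c.rinj.comp d.rinj
  rnot := by
    rintro x (h | ⟨t, ht, h⟩)
    · exact c.rnot _ h
    · have := c.rinj h; subst this; exact d.rnot _ ht
  rsurj := by
    intro g hg
    simp only [Set.mem_union, not_or] at hg
    obtain ⟨x, rfl⟩ := c.rsurj g hg.1
    obtain ⟨y, rfl⟩ := d.rsurj x (fun h => hg.2 ⟨x, h, rfl⟩)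
    exact ⟨y, rfl⟩
  coll := by
    rintro g (h | ⟨t, ht, rfl⟩)
    · simp [c.coll g h]
    · have h1 := c.hends t
      have h2 := d.coll t ht
      simp only [ends, Sym2.map_mk, Sym2.eq_iff] at h1
      simp only [Function.comp]
      rcases h1 with ⟨h, h'⟩ | ⟨h, h'⟩ <;> simp [h, h', h2]
  ker := by
    intro u v huv S hS
    have hd := d.ker _ _ huv (fun x => ∃ u, c.p u = x ∧ S u) ?_
    · have key : ∀ u, (∃ u', c.p u' = c.p u ∧ S u') ↔ S u := by
        intro u
        constructor
        · rintro ⟨u', h, h'⟩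
          exact (c.ker u' u h S fun g hg => hS g (Or.inl hg)).1 h'
        · intro h; exact ⟨u, rfl, h⟩
      rw [← key u, ← key v]; exact hd
    · have key : ∀ u, (∃ u', c.p u' = c.p u ∧ S u') ↔ S u := by
        intro u
        constructor
        · rintro ⟨u', h, h'⟩
          exact (c.ker u' u h S fun g hg => hS g (Or.inl hg)).1 h'
        · intro h; exact ⟨u, rfl, h⟩
      intro t ht
      have h1 := c.hends t
      have h2 := hS (c.r t) (Or.inr ⟨t, ht, rfl⟩)
      simp only [ends, Sym2.map_mk, Sym2.eq_iff] at h1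
      rcases h1 with ⟨h, h'⟩ | ⟨h, h'⟩ <;> rw [← h, ← h'] <;> simp only [key] <;> tauto
  hends := by
    intro x
    rw [← d.hends, ← c.hends, Sym2.map_map]; rfl

def cast (c : Con H R X) {R' : Set H.E} (h : R = R') : Con H R' X := h ▸ c

lemma cast_r (c : Con H R X) {R' : Set H.E} (h : R = R') : (c.cast h).r = c.r := by
  subst h; rfl

theorem iso (c : Con H R X) (d : Con H R Y) : IsIso X Y := by
  have hp : ∀ u v, c.p u = c.p v ↔ d.p u = d.p v := by
    intro u v
    constructor
    · intro h
      have := c.ker u v h (fun x => d.p x = d.p u) (fun g hg => by simp only [d.coll g hg])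
      exact (this.1 rfl).symm
    · intro h
      have := d.ker u v h (fun x => c.p x = c.p u) (fun g hg => by simp only [c.coll g hg])
      exact (this.1 rfl).symm
  let f : X.V → Y.V := fun x => d.p (Function.surjInv c.psurj x)
  have hf : ∀ u, f (c.p u) = d.p u := fun u => by
    rw [← hp]; exact Function.surjInv_eq c.psurj _
  have hfb : Function.Bijective f := by
    constructor
    · intro x y h
      obtain ⟨u, rfl⟩ := c.psurj x
      obtain ⟨v, rfl⟩ := c.psurj y
      rw [hf, hf] at h
      exact (hp _ _).2 h
    · intro y
      obtain ⟨u, rfl⟩ := d.psurj y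
      exact ⟨_, hf u⟩
  have hr : ∀ x, ∃ y, d.r y = c.r x := fun x => d.rsurj _ (c.rnot x)
  choose g hg using hr
  have hgb : Function.Bijective g := by
    constructor
    · intro x y h
      apply c.rinj; rw [← hg, ← hg, h]
    · intro y
      obtain ⟨x, hx⟩ := c.rsurj _ (d.rnot y)
      refine ⟨x, d.rinj ?_⟩
      rw [hg, hx]
  refine ⟨⟨Equiv.ofBijective f hfb, Equiv.ofBijective g hgb, ?_⟩⟩
  intro e
  have h1 := c.hends e
  have h2 := d.hends (g e)
  have h3 : ends Y (g e) = (ends X e).map f := by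
    rw [← h1, ← h2, Sym2.map_map, hg]
    congr 1
    funext u; exact (hf u).symm
  simpa [ends, Sym2.eq_iff] using h3

def ofIso (i : MGIso X Y) : Con X ∅ Y where
  p := i.vMap
  r := i.eMap.symm
  psurj := i.vMap.surjective
  rinj := i.eMap.symm.injective
  rnot := by simp
  rsurj := fun g _ => ⟨i.eMap g, by simp⟩
  coll := by simp
  ker := by rintro u v h S -; rw [i.vMap.injective h]
  hends := by
    intro x
    have := i.ends_eq (i.eMap.symm x)
    simp only [Equiv.apply_symm_apply] at this
    simp only [ends, Sym2.map_mk, Sym2.eq_iff]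
    rcases this with ⟨h, h'⟩ | ⟨h, h'⟩ <;> simp [h, h']

theorem of_isIso (h : IsIso X Y) : Nonempty (Con X ∅ Y) := h.elim fun i => ⟨ofIso i⟩

theorem to_isIso (c : Con X ∅ Y) : IsIso X Y := iso (refl X) c

/-- transport along iso -/
def compIso (c : Con H R X) (d : Con X ∅ Y) : Con H R Y :=
  (c.comp d).cast (by simp)

lemma compIso_r (c : Con H R X) (d : Con X ∅ Y) : (c.compIso d).r = c.r ∘ d.r := by
  rw [compIso, cast_r]; rfl

theorem isIso_trans {A B C : Multigraph} (h : IsIso A B) (h' : IsIso B C) : IsIso A C := by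
  obtain ⟨c⟩ := of_isIso h
  obtain ⟨d⟩ := of_isIso h'
  exact (c.compIso d).to_isIso

theorem isIso_symm {A B : Multigraph} (h : IsIso A B) : IsIso B A := by
  obtain ⟨c⟩ := of_isIso h
  exact iso c (refl A)

theorem isIso_refl (A : Multigraph) : IsIso A A := (refl A).to_isIso

def contract (G : Multigraph) (e : G.E) : Con G {e} (G.contract e) where
  p := Quot.mk _
  r := Subtype.val
  psurj := Quot.mk_surjective
  rinj := Subtype.val_injective
  rnot := fun x => x.2
  rsurj := fun g hg => ⟨⟨g, hg⟩, rfl⟩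
  coll := by
    rintro g rfl
    exact Quot.sound ⟨rfl, rfl⟩
  ker := by
    intro u v h S hS
    have := congrArg (Quot.lift S (by
      rintro a b ⟨rfl, rfl⟩
      exact propext (hS e rfl))) h
    exact iff_of_eq this
  hends := by intro x; rfl

theorem contract_iff {G X : Multigraph} {e : G.E} :
    IsIso (G.contract e) X ↔ Nonempty (Con G {e} X) := by
  constructor
  · intro h
    obtain ⟨d⟩ := of_isIso h
    exact ⟨(contract G e).compIso d⟩
  · rintro ⟨c⟩
    exact iso (contract G e) c

/-! cuts -/
lemma cut_pre (c : Con H R X) (B : Finset X.V) :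
    H.cutEdges (univ.filter fun u => c.p u ∈ B) = (X.cutEdges B).image c.r := by
  ext g
  rw [mem_cut, mem_image]
  simp only [mem_filter, mem_univ, true_and]
  by_cases hg : g ∈ R
  · rw [c.coll g hg]
    simp only [not_true_eq_false, false_iff]
    rintro ⟨x, _, rfl⟩
    exact c.rnot _ hg
  · obtain ⟨x, rfl⟩ := c.rsurj g hg
    have := c.hends x
    simp only [ends, Sym2.map_mk] at this
    rw [← mem_cut_ends (e := x) (G := X) this.symm]
    constructor
    · intro h; exact ⟨x, h, rfl⟩
    · rintro ⟨y, hy, h⟩; rwa [← c.rinj h]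

lemma card_cut_pre (c : Con H R X) (B : Finset X.V) :
    (H.cutEdges (univ.filter fun u => c.p u ∈ B)).card = (X.cutEdges B).card := by
  rw [cut_pre, card_image_of_injective _ c.rinj]

lemma sat (c : Con H R X) (A : Finset H.V) (h : ∀ g ∈ R, g ∉ H.cutEdges A) :
    ∃ B : Finset X.V, A = univ.filter fun u => c.p u ∈ B := by
  refine ⟨A.image c.p, ?_⟩
  ext u
  simp only [mem_filter, mem_univ, true_and, mem_image]
  constructor
  · intro h; exact ⟨u, h, rfl⟩
  · rintro ⟨v, hv, h'⟩
    refine (c.ker v u h' (fun x => x ∈ A) ?_).1 hv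
    intro g hg
    have := h g hg
    rw [mem_cut] at this
    tauto

lemma ec (c : Con H R X) {j : ℕ} (h : EC H j) : EC X j := by
  rintro B ⟨x, hx⟩ h2
  rw [← c.card_cut_pre]
  apply h
  · obtain ⟨u, rfl⟩ := c.psurj x
    exact ⟨u, by simp [hx]⟩
  · intro h3
    apply h2
    ext y
    obtain ⟨v, rfl⟩ := c.psurj y
    have := mem_univ v
    rw [← h3] at this
    simpa using this

/-- a cut of `H` avoiding `R` has at least `j` edges -/
lemma ec_avoid (c : Con H R X) {j : ℕ} (h : EC X j) (A : Finset H.V) (hn : (H.cutEdges A).Nonempty)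
    (hA : ∀ g ∈ R, g ∉ H.cutEdges A) : j ≤ (H.cutEdges A).card := by
  obtain ⟨B, rfl⟩ := c.sat A hA
  have h1 : (X.cutEdges B).Nonempty := by
    rw [← card_pos, ← c.card_cut_pre, card_pos]; exact hn
  obtain ⟨h2, h3⟩ := cut_nontriv h1
  rw [c.card_cut_pre]
  exact h B h2 h3

lemma kerE {e : H.E} (c : Con H {e} X) {u v : H.V} (h : c.p u = c.p v) :
    u = v ∨ (u = H.src e ∧ v = H.tgt e) ∨ (u = H.tgt e ∧ v = H.src e) := by
  by_cases hu : u = H.src e ∨ u = H.tgt e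
  · have := c.ker u v h (fun x => x = H.src e ∨ x = H.tgt e) (by rintro g rfl; simp)
    have := this.1 hu
    grind
  · have := c.ker u v h (fun x => x = u) (by rintro g rfl; grind)
    left; exact (this.1 rfl).symm

lemma card_V {e : H.E} (c : Con H {e} X) (hl : H.src e ≠ H.tgt e) : H.nV = X.nV + 1 := by
  have : (univ.erase (H.src e)).card = (univ : Finset X.V).card := by
    apply card_bij (fun u _ => c.p u)
    · simp
    · intro u hu v hv h
      simp at hu hv
      rcases c.kerE h with h | h | h
      · exact h
      · exact absurd h.1 hu
      · exact absurd h.2 hv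
    · intro x _
      obtain ⟨u, rfl⟩ := c.psurj x
      by_cases hu : u = H.src e
      · refine ⟨H.tgt e, by simp; exact fun h => hl h.symm, ?_⟩
        rw [hu]; exact (c.coll e rfl).symm
      · exact ⟨u, by simp [hu], rfl⟩
  rw [card_erase_of_mem (mem_univ _)] at this
  have h0 : 0 < (univ : Finset H.V).card := card_pos.2 ⟨H.src e, mem_univ _⟩
  simp only [nV, ← card_univ]
  omega

lemma card_E (c : Con H R X) : H.nE = X.nE + (univ.filter fun g => g ∈ R).card := by
  have : (univ.filter fun g => g ∉ R) = (univ : Finset X.E).image c.r := by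
    ext g
    simp only [mem_filter, mem_univ, true_and, mem_image]
    constructor
    · exact c.rsurj g
    · rintro ⟨x, rfl⟩; exact c.rnot x
  have h2 := card_filter_add_card_filter_not (s := (univ : Finset H.E)) (fun g => g ∈ R)
  rw [this, card_image_of_injective _ c.rinj] at h2
  simp only [nE, ← card_univ]
  omega

lemma card_E1 {e : H.E} (c : Con H {e} X) : H.nE = X.nE + 1 := by
  rw [c.card_E]
  congr 1
  rw [card_eq_one]
  exact ⟨e, by ext; simp⟩

/-- degrees -/
lemma sum_deg (c : Con H R X) (z : X.V) : ∑ u ∈ univ.filter (fun u => c.p u = z), H.deg u =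
    X.deg z + 2 * (univ.filter fun g => g ∈ R ∧ c.p (H.src g) = z).card := by
  have h1 : ∑ u ∈ univ.filter (fun u => c.p u = z), H.deg u =
      ∑ g : H.E, ((if c.p (H.src g) = z then 1 else 0) + (if c.p (H.tgt g) = z then 1 else 0)) := by
    simp only [deg, Finset.sum_add_distrib, ← card_filter]
    congr 1
    · rw [card_eq_sum_card_fiberwise (f := H.src) (t := univ.filter (fun u => c.p u = z))]
      · apply sum_congr rfl
        intro u hu
        congr 1
        ext g
        simp at hu ⊢
        rintro rfl; exact hu
      · intro g; simp
    · rw [card_eq_sum_card_fiberwise (f := H.tgt) (t := univ.filter (fun u => c.p u = z))]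
      · apply sum_congr rfl
        intro u hu
        congr 1
        ext g
        simp at hu ⊢
        rintro rfl; exact hu
      · intro g; simp
  have h2 : X.deg z = ∑ x : X.E, ((if c.p (H.src (c.r x)) = z then 1 else 0) +
      (if c.p (H.tgt (c.r x)) = z then 1 else 0)) := by
    have : X.deg z = ∑ x : X.E, ((if X.src x = z then 1 else 0) +
      (if X.tgt x = z then 1 else 0)) := by
      simp only [deg, Finset.sum_add_distrib, ← card_filter]
    rw [this]
    apply sum_congr rfl
    intro x _
    have := c.hends x
    simp only [ends, Sym2.map_mk, Sym2.eq_iff] at this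
    rcases this with ⟨h, h'⟩ | ⟨h, h'⟩ <;> rw [h, h']
    rw [add_comm]
  rw [h1, h2, ← Finset.sum_filter_add_sum_filter_not univ (fun g => g ∉ R)]
  congr 1
  · symm
    apply sum_bij (fun x _ => c.r x)
    · intro x _; simp [c.rnot]
    · intro x _ y _ h; exact c.rinj h
    · intro g hg
      simp at hg
      obtain ⟨x, rfl⟩ := c.rsurj g hg
      exact ⟨x, mem_univ _, rfl⟩
    · intros; rfl
  · have h3 : ∀ g ∈ univ.filter (fun g => ¬ g ∉ R), ((if c.p (H.src g) = z then 1 else 0) +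
      (if c.p (H.tgt g) = z then 1 else 0)) = 2 * (if c.p (H.src g) = z then 1 else 0) := by
      intro g hg
      simp at hg
      rw [← c.coll g hg]; ring
    rw [sum_congr rfl h3, ← Finset.mul_sum, ← card_filter, filter_filter]
    simp

lemma deg_iso (c : Con H ∅ X) (u : H.V) : X.deg (c.p u) = H.deg u := by
  have := c.sum_deg (c.p u)
  have h2 : (univ.filter (fun v => c.p v = c.p u)) = {u} := by
    ext v
    simp only [mem_filter, mem_univ, true_and, mem_singleton]
    constructor
    · intro h; exact (c.ker v u h (fun x => x = u) (by simp)).2 rfl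
    · rintro rfl; rfl
  rw [h2] at this
  simpa using this.symm

lemma deg_merge {e : H.E} (c : Con H {e} X) (hl : H.src e ≠ H.tgt e) :
    H.deg (H.src e) + H.deg (H.tgt e) = X.deg (c.p (H.src e)) + 2 := by
  have := c.sum_deg (c.p (H.src e))
  have h2 : (univ.filter (fun v => c.p v = c.p (H.src e))) = {H.src e, H.tgt e} := by
    ext v
    simp only [mem_filter, mem_univ, true_and, mem_singleton, mem_insert]
    constructor
    · intro h
      rcases c.kerE h with h | h | h <;> tauto
    · rintro (rfl | rfl)
      · rfl
      · exact (c.coll e rfl).symm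
  rw [h2, sum_pair hl] at this
  rw [this]
  congr 1
  rw [Nat.mul_eq_left (by norm_num), card_eq_one]
  exact ⟨e, by ext g; simp; rintro rfl; rfl⟩

lemma deg_other {e : H.E} (c : Con H {e} X) (u : H.V) (h1 : u ≠ H.src e) (h2 : u ≠ H.tgt e) :
    X.deg (c.p u) = H.deg u := by
  have := c.sum_deg (c.p u)
  have h2 : (univ.filter (fun v => c.p v = c.p u)) = {u} := by
    ext v
    simp only [mem_filter, mem_univ, true_and, mem_singleton]
    constructor
    · intro h
      rcases c.kerE h with h | h | h <;> tauto
    · rintro rfl; rfl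
  rw [h2, sum_singleton] at this
  rw [this, left_eq_add, mul_eq_zero, card_eq_zero]
  right
  ext g
  simp
  rintro rfl h
  rcases c.kerE h with h | h | h <;> tauto

end Con
end BG

namespace BG
open Multigraph

lemma nonloop_of_cut {H : Multigraph} {A : Finset H.V} {e : H.E} (h : e ∈ H.cutEdges A) :
    H.src e ≠ H.tgt e := by
  rw [mem_cut] at h
  intro h'; rw [h'] at h; exact h Iff.rfl

lemma exists_symm {H : Multigraph} (A B : Finset H.V) : ∃ C : Finset H.V,
    ∀ e, e ∈ H.cutEdges C ↔ ¬ (e ∈ H.cutEdges A ↔ e ∈ H.cutEdges B) :=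
  ⟨symmDiff A B, cut_symm A B⟩

lemma pair_iff {H : Multigraph} {A : Finset H.V} {e e' : H.E} :
    H.cutEdges A = {e, e'} ↔ ∀ x, x ∈ H.cutEdges A ↔ x = e ∨ x = e' := by
  rw [Finset.ext_iff]; simp

lemma ec2_expand' {H X : Multigraph} {e' g : H.E} (c : Con H {e'} X) (hX : EC X 2)
    {C : Finset H.V} (hC : H.cutEdges C = {e', g}) (hg : g ≠ e') : EC H 2 := by
  intro A h1 h2
  by_contra h
  have h3 : (H.cutEdges A).card ≤ 1 := by omega
  by_cases he : e' ∈ H.cutEdges A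
  · have hA : ∀ x, x ∈ H.cutEdges A ↔ x = e' := fun x =>
      ⟨fun hx => card_le_one.1 h3 _ hx _ he, fun hx => hx ▸ he⟩
    have hs : H.cutEdges (symmDiff A C) = {g} := by
      ext x
      rw [cut_symm, hA, hC]
      simp only [mem_insert, mem_singleton]
      grind
    have := c.ec_avoid hX (symmDiff A C) (by rw [hs]; simp) (by
      rintro x rfl; rw [hs]; simpa using Ne.symm hg)
    rw [hs] at this; simp at this
  · obtain ⟨B, rfl⟩ := c.sat A (by rintro x rfl; exact he)
    rw [c.card_cut_pre] at h
    apply h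
    apply hX
    · obtain ⟨u, hu⟩ := h1
      exact ⟨c.p u, by simpa using hu⟩
    · rintro rfl; apply h2; simp

lemma ec2_expand {H X : Multigraph} {e' g : H.E} (c : Con H {e'} X) (hX : EC X 2)
    {C : Finset H.V} (hC : ∀ x, x ∈ H.cutEdges C ↔ x = e' ∨ x = g) (hg : g ≠ e') : EC H 2 :=
  ec2_expand' c hX (pair_iff.2 hC) hg

lemma triv2_contract {H X : Multigraph} {e : H.E} (c : Con H {e} X) (hl : H.src e ≠ H.tgt e)
    (hH : Triv2 H) : Triv2 X := by
  intro B hB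
  have hA := c.card_cut_pre B
  rw [hB] at hA
  obtain ⟨B', h1, h2⟩ := hH _ hA
  rw [c.cut_pre] at h1
  obtain ⟨B'', rfl⟩ := c.sat B' (by
    rintro g rfl; rw [h1]; simp only [mem_image, not_exists, not_and]
    intro x _ hx; exact c.rnot x hx)
  rw [c.cut_pre] at h1
  refine ⟨B'', Finset.image_injective c.rinj h1, ?_⟩
  intro z hz
  obtain ⟨u, rfl⟩ := c.psurj z
  have hu := h2 u (by simpa using hz)
  have hc := c.coll e rfl
  by_cases h3 : c.p u = c.p (H.src e)
  · have h4 := h2 (H.src e) (by simpa [← h3] using hz)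
    have h5 := h2 (H.tgt e) (by simpa [← hc, ← h3] using hz)
    have := c.deg_merge hl
    rw [h3]; omega
  · rw [c.deg_other u (by rintro rfl; exact h3 rfl) (by rintro rfl; exact h3 hc.symm), hu]

lemma shift_data {G G' : Multigraph} (h : IsShiftOf G G') :
    ∃ (H : Multigraph) (e e' : H.E) (A : Finset H.V), e ≠ e' ∧ H.cutEdges A = {e, e'} ∧
      Nonempty (Con H {e'} G) ∧ Nonempty (Con H {e} G') := by
  obtain ⟨H, e, e', hne, _, _, ⟨⟨A, _, _, hA⟩, _⟩, h1, h2⟩ := h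
  exact ⟨H, e, e', A, hne, hA.symm, Con.contract_iff.1 h1, Con.contract_iff.1 h2⟩

lemma mk_shift {G G' H : Multigraph} {e e' : H.E} {A : Finset H.V} (hne : e ≠ e')
    (hA' : ∀ x, x ∈ H.cutEdges A ↔ x = e ∨ x = e') (hH : EC H 2) (c : Con H {e'} G) (d : Con H {e} G') :
    IsShiftOf G G' := by
  have hA := pair_iff.2 hA'
  refine ⟨H, e, e', hne, nonloop_of_cut (A := A) (by rw [hA]; simp),
    nonloop_of_cut (A := A) (by rw [hA]; simp), ?_, Con.contract_iff.2 ⟨c⟩, Con.contract_iff.2 ⟨d⟩⟩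
  rw [← hA]
  exact bond_of hH (by rw [hA]; exact card_pair hne)

lemma shift_symm {G G' : Multigraph} (h : IsShiftOf G G') : IsShiftOf G' G := by
  obtain ⟨H, e, e', hne, h1, h2, h3, h4, h5⟩ := h
  exact ⟨H, e', e, hne.symm, h2, h1, by rwa [Finset.pair_comm], h5, h4⟩

lemma shift_ec2 {G G' : Multigraph} (h : IsShiftOf G G') (hG : EC G 2) : EC G' 2 := by
  obtain ⟨H, e, e', A, hne, hA, ⟨c⟩, ⟨d⟩⟩ := shift_data h
  exact d.ec (ec2_expand' c hG (C := A) (g := e) (by rw [hA, Finset.pair_comm]) hne)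

lemma shift_ec3 {G G' : Multigraph} (h : IsShiftOf G G') (hG : EC G 3) : EC G' 3 := by
  obtain ⟨H, e, e', C, hne, hC, ⟨c⟩, ⟨d⟩⟩ := shift_data h
  intro B h1 h2
  by_contra h
  have hcp := d.cut_pre B
  have hcard := d.card_cut_pre B
  set A := univ.filter fun u => d.p u ∈ B with hAdef
  have heA : e ∉ H.cutEdges A := by
    rw [hcp]; simp only [mem_image, not_exists, not_and]
    intro x _ hx; exact d.rnot x hx
  have hG2 : EC G 2 := fun A h1 h2 => le_trans (by norm_num) (hG A h1 h2)
  have hH2 : EC H 2 := ec2_expand' c hG2 (C := C) (g := e) (by rw [hC, Finset.pair_comm]) hne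
  have hB2 : 2 ≤ (G'.cutEdges B).card := d.ec hH2 B h1 h2
  have hne' : (H.cutEdges A).Nonempty := by rw [← card_pos]; omega
  by_cases he' : e' ∈ H.cutEdges A
  · have hs : H.cutEdges (symmDiff A C) = insert e ((H.cutEdges A).erase e') := by
      ext x
      rw [cut_symm, hC]
      simp only [mem_insert, mem_singleton, mem_erase]
      by_cases hx : x = e
      · subst hx; simp [heA]
      · by_cases hx' : x = e'
        · subst hx'; simp [he', hx]
        · simp [hx, hx']
    have := c.ec_avoid hG (symmDiff A C) (by rw [hs]; simp) (by
      rintro x rfl; rw [hs]; simpa using Ne.symm hne)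
    rw [hs] at this
    have h5 := card_insert_le e ((H.cutEdges A).erase e')
    rw [card_erase_of_mem he'] at h5
    omega
  · have := c.ec_avoid hG A hne' (by rintro x rfl; exact he')
    omega

def Inv2 (X : Multigraph) : Prop := EC X 2 ∧ (∀ v, X.deg v ≤ 3) ∧ Triv2 X

/-- main step for triviality in an expansion -/
lemma triv2_expand {H X : Multigraph} {e' : H.E} (c : Con H {e'} X) (hl : H.src e' ≠ H.tgt e')
    (hX : Triv2 X) (hH : EC H 2) (x : H.V) (hx : x = H.src e' ∨ x = H.tgt e')
    (hdx : H.deg x = 2) : Triv2 H := by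
  have hdeg : ∀ v, 2 ≤ H.deg v := by
    intro v
    by_cases h : v = H.src e'
    · exact deg_ge hH (u := H.tgt e') (by rw [h]; exact hl.symm)
    · exact deg_ge hH (u := H.src e') (Ne.symm h)
  have avoid : ∀ A : Finset H.V, (H.cutEdges A).card = 2 → e' ∉ H.cutEdges A →
      ∃ B : Finset H.V, H.cutEdges B = H.cutEdges A ∧ ∀ v ∈ B, H.deg v = 2 := by
    intro A hA he
    obtain ⟨B, rfl⟩ := c.sat A (by rintro y rfl; exact he)
    rw [c.card_cut_pre] at hA
    obtain ⟨B', h1, h2⟩ := hX B hA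
    refine ⟨univ.filter fun u => c.p u ∈ B', ?_, ?_⟩
    · rw [c.cut_pre, c.cut_pre, h1]
    · intro v hv
      have h3 := h2 (c.p v) (by simpa using hv)
      by_cases h : c.p v = c.p (H.src e')
      · have h5 := c.deg_merge hl
        rw [← h, h3] at h5
        have h6 := hdeg (H.src e')
        have h7 := hdeg (H.tgt e')
        rcases c.kerE h with h | h | h
        · rw [h]; omega
        · exact absurd (h.2) hl
        · rw [h.1]; omega
      · rwa [c.deg_other v (by rintro rfl; exact h rfl)
          (by rintro rfl; exact h (c.coll e' rfl).symm)] at h3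
  have he'x : e' ∈ H.cutEdges {x} := by
    rw [mem_cut]; simp only [mem_singleton]
    rcases hx with rfl | rfl <;> grind
  have hnt := cut_nontriv ⟨e', he'x⟩
  have hcx : (H.cutEdges {x}).card = 2 :=
    le_antisymm (hdx ▸ cut_single_le H x) (hH _ hnt.1 hnt.2)
  intro A hA
  by_cases he : e' ∈ H.cutEdges A
  · by_cases heq : H.cutEdges A = H.cutEdges {x}
    · exact ⟨{x}, heq.symm, by simpa using hdx⟩
    · obtain ⟨g, hg⟩ : ∃ g, (H.cutEdges {x}).erase e' = {g} := by
        rw [← card_eq_one, card_erase_of_mem he'x, hcx]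
      obtain ⟨h, hh⟩ : ∃ g, (H.cutEdges A).erase e' = {g} := by
        rw [← card_eq_one, card_erase_of_mem he, hA]
      have hg' : H.cutEdges {x} = {e', g} := by rw [← hg, insert_erase he'x]
      have hh' : H.cutEdges A = {e', h} := by rw [← hh, insert_erase he]
      have hge : g ≠ e' := by
        have : g ∈ (H.cutEdges {x}).erase e' := by rw [hg]; simp
        exact (mem_erase.1 this).1
      have hhe : h ≠ e' := by
        have : h ∈ (H.cutEdges A).erase e' := by rw [hh]; simp
        exact (mem_erase.1 this).1
      have hgh : g ≠ h := by rintro rfl; exact heq (by rw [hg', hh'])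
      have hs : H.cutEdges (symmDiff A {x}) = {g, h} := by
        ext y; rw [cut_symm, hg', hh']; simp only [mem_insert, mem_singleton]
        by_cases h1 : y = e' <;> by_cases h2 : y = g <;> by_cases h3 : y = h <;> grind
      obtain ⟨B, h1, h2⟩ := avoid (symmDiff A {x}) (by rw [hs]; exact card_pair hgh) (by
        rw [hs]; simp [hge.symm, hhe.symm])
      refine ⟨symmDiff B {x}, ?_, ?_⟩
      · ext y; rw [cut_symm, h1, hs, hg', hh']; simp only [mem_insert, mem_singleton]
        by_cases h1 : y = e' <;> by_cases h2 : y = g <;> by_cases h3 : y = h <;> grind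
      · intro v hv
        rw [mem_symmDiff] at hv
        rcases hv with hv | hv
        · exact h2 v hv.1
        · rw [mem_singleton.1 hv.1, hdx]
  · exact avoid A hA he

lemma inv2_expand {H X : Multigraph} {e' e : H.E} (c : Con H {e'} X) (hX : Inv2 X)
    {C : Finset H.V} (hC : H.cutEdges C = {e', e}) (hne : e ≠ e') : Inv2 H := by
  obtain ⟨h1, h2, h3⟩ := hX
  have hH := ec2_expand' c h1 hC hne
  have hl : H.src e' ≠ H.tgt e' := nonloop_of_cut (A := C) (by rw [hC]; simp)
  have hm := c.deg_merge hl
  have d1 : 2 ≤ H.deg (H.src e') := deg_ge hH hl.symm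
  have d2 : 2 ≤ H.deg (H.tgt e') := deg_ge hH hl
  have d3 := h2 (c.p (H.src e'))
  refine ⟨hH, ?_, ?_⟩
  · intro v
    by_cases hv : v = H.src e'
    · rw [hv]; omega
    · by_cases hv' : v = H.tgt e'
      · rw [hv']; omega
      · rw [← c.deg_other v hv hv']; exact h2 _
  · have : H.deg (H.src e') = 2 ∨ H.deg (H.tgt e') = 2 := by omega
    rcases this with h | h
    · exact triv2_expand c hl h3 hH _ (Or.inl rfl) h
    · exact triv2_expand c hl h3 hH _ (Or.inr rfl) h

lemma shift_inv2 {G G' : Multigraph} (h : IsShiftOf G G') (hG : Inv2 G) : Inv2 G' := by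
  obtain ⟨H, e, e', C, hne, hC, ⟨c⟩, ⟨d⟩⟩ := shift_data h
  obtain ⟨h1, h2, h3⟩ := inv2_expand c hG (C := C) (e := e) (by rw [hC, Finset.pair_comm]) hne
  have hl : H.src e ≠ H.tgt e := nonloop_of_cut (A := C) (by rw [hC]; simp)
  refine ⟨d.ec h1, ?_, triv2_contract d hl h3⟩
  obtain ⟨B, hB, hd⟩ := h3 C (by rw [hC]; exact card_pair hne)
  have heB : e ∈ H.cutEdges B := by rw [hB, hC]; simp
  have hm := d.deg_merge hl
  have hmerge : G'.deg (d.p (H.src e)) ≤ 3 := by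
    have k1 := h2 (H.src e)
    have k2 := h2 (H.tgt e)
    rw [mem_cut] at heB
    by_cases hs : H.src e ∈ B
    · have := hd _ hs; omega
    · have ht : H.tgt e ∈ B := by tauto
      have := hd _ ht; omega
  intro z
  obtain ⟨u, rfl⟩ := d.psurj z
  by_cases hu : u = H.src e
  · rw [hu]; exact hmerge
  · by_cases hu' : u = H.tgt e
    · rw [hu', ← d.coll e rfl]; exact hmerge
    · rw [d.deg_other u hu hu']; exact h2 u

lemma iso_triv2 {H X : Multigraph} (c : Con H ∅ X) (h : Triv2 X) : Triv2 H := by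
  intro A hA
  obtain ⟨B, rfl⟩ := c.sat A (by simp)
  rw [c.card_cut_pre] at hA
  obtain ⟨B', h1, h2⟩ := h B hA
  refine ⟨univ.filter fun u => c.p u ∈ B', by rw [c.cut_pre, c.cut_pre, h1], ?_⟩
  intro v hv
  rw [← c.deg_iso]; exact h2 _ (by simpa using hv)

end BG

namespace BG
open Multigraph

lemma cut_pre_mem {H X : Multigraph} {R : Set H.E} (c : Con H R X) (B : Finset X.V) :
    ∃ A' : Finset H.V, ∀ x, x ∈ H.cutEdges A' ↔ ∃ y ∈ X.cutEdges B, c.r y = x := by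
  refine ⟨univ.filter fun u => c.p u ∈ B, fun x => ?_⟩
  rw [c.cut_pre B, mem_image]

abbrev sub (X : Multigraph) (f : X.E) : Multigraph where
  V := Option X.V
  E := Option X.E
  src := fun g => match g with
    | none => none
    | some g => some (X.src g)
  tgt := fun g => match g with
    | none => some (X.tgt f)
    | some g => if g = f then none else some (X.tgt g)

lemma ends_sub_none (X : Multigraph) (f : X.E) :
    ends (sub X f) (none : Option X.E) = s((none : Option X.V), some (X.tgt f)) := rfl
lemma ends_sub_self (X : Multigraph) (f : X.E) :
    ends (sub X f) (some f : Option X.E) = s(some (X.src f), (none : Option X.V)) := by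
  simp [ends, sub]
lemma ends_sub_some (X : Multigraph) (f g : X.E) (h : g ≠ f) :
    ends (sub X f) (some g : Option X.E) = (ends X g).map (some : X.V → Option X.V) := by
  simp [ends, sub, h]

/-- contract new edge -/
def subNone (X : Multigraph) (f : X.E) : Con (sub X f) ({(none : Option X.E)} : Set (Option X.E)) X where
  p := fun (u : Option X.V) => match u with
    | none => X.tgt f
    | some u => u
  r := fun g => (some g : Option X.E)
  psurj := fun u => ⟨(some u : Option X.V), rfl⟩
  rinj := fun a b h => by simpa using (h : (some a : Option X.E) = some b)
  rnot := fun x h => by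
    have : (some x : Option X.E) = none := h
    simp at this
  rsurj := by
    rintro (_ | g) h
    · exact absurd rfl h
    · exact ⟨g, rfl⟩
  coll := by
    intro g hg
    have : g = (none : Option X.E) := hg
    subst this; rfl
  ker := by
    intro u v h S hS
    have := hS (none : Option X.E) rfl
    change S (none : Option X.V) ↔ S (some (X.tgt f) : Option X.V) at this
    rcases u with _ | u <;> rcases v with _ | v <;> simp at h
    · rfl
    · subst h; exact this
    · subst h; exact this.symm
    · subst h; rfl
  hends := by
    intro g
    by_cases h : g = f
    · subst h; rw [ends_sub_self]; rfl
    · rw [ends_sub_some _ _ _ h, Sym2.map_map]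
      rfl

/-- the lifted contraction -/
theorem subLift {H X : Multigraph} {R : Set H.E} (c : Con H R X) (f : X.E) :
    Nonempty (Con (sub H (c.r f)) ((some '' R : Set (Option H.E)) : Set (sub H (c.r f)).E) (sub X f)) := by
  have hor := c.hends f
  simp only [ends, Sym2.map_mk, Sym2.eq_iff] at hor
  obtain ⟨r, hr1, hr2, hr3, hr4, hr5⟩ : ∃ r : Option X.E → Option H.E, Function.Injective r ∧
      (∀ x, r x ∉ (some '' R : Set (Option H.E))) ∧
      (∀ g, g ∉ (some '' R : Set (Option H.E)) → ∃ x, r x = g) ∧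
      (∀ x, x ≠ f → r (some x) = some (c.r x)) ∧
      (∀ x, x = none ∨ x = some f → (ends (sub H (c.r f)) (r x)).map (Option.map c.p) = ends (sub X f) x) := by
    rcases hor with ⟨h, h'⟩ | ⟨h, h'⟩
    · refine ⟨Option.map c.r, Option.map_injective c.rinj, ?_, ?_, ?_, ?_⟩
      · rintro (_ | x) ⟨y, hy, h⟩
        · simp at h
        · simp at h; subst h; exact c.rnot x hy
      · rintro (_ | g) hg
        · exact ⟨none, rfl⟩
        · obtain ⟨x, rfl⟩ := c.rsurj g (fun h => hg ⟨g, h, rfl⟩)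
          exact ⟨some x, rfl⟩
      · intros; rfl
      · rintro x (rfl | rfl)
        · rw [ends_sub_none]
          change Sym2.map _ (ends (sub H (c.r f)) (none : Option H.E)) = _
          rw [ends_sub_none]; simp [h']
        · rw [ends_sub_self]
          change Sym2.map _ (ends (sub H (c.r f)) (some (c.r f) : Option H.E)) = _
          rw [ends_sub_self]; simp [h]
    · refine ⟨fun x => Option.map c.r (Equiv.swap none (some f) x),
        (Option.map_injective c.rinj).comp (Equiv.injective _), ?_, ?_, ?_, ?_⟩
      · intro x
        have key : ∀ x : Option X.E, Option.map c.r x ∉ (some '' R : Set (Option H.E)) := by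
          rintro (_ | x) ⟨y, hy, h⟩
          · simp at h
          · simp at h; subst h; exact c.rnot x hy
        exact key _
      · intro g hg
        obtain ⟨x, hx⟩ : ∃ x, Option.map c.r x = g := by
          rcases g with _ | g
          · exact ⟨none, rfl⟩
          · obtain ⟨x, rfl⟩ := c.rsurj g (fun h => hg ⟨g, h, rfl⟩)
            exact ⟨some x, rfl⟩
        exact ⟨Equiv.swap none (some f) x, by simp [hx]⟩
      · intro x hx
        simp only
        rw [Equiv.swap_apply_of_ne_of_ne (by simp) (by simpa using hx)]; rfl
      · rintro x (rfl | rfl)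
        · rw [ends_sub_none]
          simp only [Equiv.swap_apply_left]
          change Sym2.map _ (ends (sub H (c.r f)) (some (c.r f) : Option H.E)) = _
          rw [ends_sub_self]; simp [h, Sym2.eq_swap]
        · rw [ends_sub_self]
          simp only [Equiv.swap_apply_right]
          change Sym2.map _ (ends (sub H (c.r f)) (none : Option H.E)) = _
          rw [ends_sub_none]; simp [h', Sym2.eq_swap]
  have hRne : ∀ g ∈ R, g ≠ c.r f := by rintro g hg rfl; exact c.rnot _ hg
  have htgt : ∀ g ∈ R, (sub H (c.r f)).tgt (some g : Option H.E) = (some (H.tgt g) : Option H.V) := by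
    intro g hg; simp [sub, hRne g hg]
  refine ⟨⟨Option.map c.p, r, ?_, hr1, hr2, hr3, ?_, ?_, ?_⟩⟩
  · rintro (_ | x)
    · exact ⟨(none : Option H.V), rfl⟩
    · obtain ⟨u, rfl⟩ := c.psurj x
      exact ⟨(some u : Option H.V), rfl⟩
  · rintro _ ⟨g, hg, rfl⟩
    rw [htgt g hg]
    change some (c.p (H.src g)) = some (c.p (H.tgt g))
    rw [c.coll g hg]
  · intro u v huv S hS
    rcases u with _ | u <;> rcases v with _ | v
    · rfl
    · simp at huv
    · simp at huv
    · simp at huv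
      refine c.ker u v huv (fun x => S (some x : Option H.V)) ?_
      intro g hg
      have := hS (some g : Option H.E) ⟨g, hg, rfl⟩
      rw [htgt g hg] at this
      exact this
  · rintro (_ | x)
    · exact hr5 _ (Or.inl rfl)
    · by_cases hx : x = f
      · exact hr5 _ (Or.inr (by rw [hx]))
      · rw [hr4 x hx, ends_sub_some _ _ _ hx,
          ends_sub_some _ _ _ (fun h => hx (c.rinj h)), ← c.hends, Sym2.map_map, Sym2.map_map]
        rfl

theorem subLift1 {H X : Multigraph} {a : H.E} (c : Con H {a} X) (f : X.E) :
    Nonempty (Con (sub H (c.r f)) ({(some a : Option H.E)} : Set (Option H.E)) (sub X f)) := by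
  obtain ⟨d⟩ := subLift c f
  exact ⟨d.cast (by simp)⟩

theorem subIso {H X : Multigraph} (c : Con H ∅ X) (f : X.E) :
    Nonempty (Con (sub H (c.r f)) ∅ (sub X f)) := by
  obtain ⟨d⟩ := subLift c f
  exact ⟨d.cast (by simp)⟩

/-- cuts in `sub` -/
lemma sub_cut_none (X : Multigraph) (f : X.E) : ∃ C : Finset (sub X f).V, ∀ x : (sub X f).E,
    x ∈ (sub X f).cutEdges C ↔ x = none ∨ x = some f := by
  refine ⟨({(none : Option X.V)} : Finset (Option X.V)), ?_⟩
  rintro (_ | g)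
  · rw [mem_cut_ends (ends_sub_none X f)]; simp
  · by_cases h : g = f
    · subst h; rw [mem_cut_ends (ends_sub_self X g)]; simp
    · rw [mem_cut_ends (u := (some (X.src g) : Option X.V)) (v := (some (X.tgt g) : Option X.V))
        (by rw [ends_sub_some _ _ _ h]; rfl)]; simp [h]

lemma sub_ec2 {X : Multigraph} (f : X.E) (h : EC X 2) : EC (sub X f) 2 := by
  obtain ⟨C, hC⟩ := sub_cut_none X f
  exact ec2_expand (g := (some f : Option X.E)) (subNone X f) h hC (by simp)

lemma sub_cut_some {X : Multigraph} (f : X.E) (A : Finset X.V) :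
    ∃ A' : Finset (sub X f).V, ∀ x : (sub X f).E, x ∈ (sub X f).cutEdges A' ↔
      ∃ y ∈ X.cutEdges A, some y = x := by
  exact cut_pre_mem (subNone X f) A

lemma sub_cut_swap {X : Multigraph} {f a : X.E} (hfa : a ≠ f) {A : Finset X.V}
    (hA : ∀ x, x ∈ X.cutEdges A ↔ x = f ∨ x = a) :
    ∃ A' : Finset (sub X f).V, ∀ x : (sub X f).E, x ∈ (sub X f).cutEdges A' ↔
      x = none ∨ x = some a := by
  obtain ⟨A', hA'⟩ := sub_cut_some f A
  obtain ⟨C, hC⟩ := sub_cut_none X f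
  obtain ⟨C', hC'⟩ := exists_symm A' C
  refine ⟨C', fun x => ?_⟩
  rw [hC', hA', hC]
  simp only [hA]
  rcases x with _ | x
  · simp
  · by_cases h1 : x = f
    · subst h1; simp [Ne.symm hfa]
    · simp [h1]

/-- degree 2 vertex: `Y` is a subdivision of `Y/e` -/
theorem sub_of_deg2 {Y X : Multigraph} {e f : Y.E} {x y u : Y.V} (c : Con Y {e} X) (f' : X.E)
    (hf : c.r f' = f) (hef : e ≠ f) (he : ends Y e = s(x, y)) (hfe : ends Y f = s(x, u))
    (hxy : x ≠ y) (hxu : x ≠ u)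
    (hoth : ∀ g, g ≠ e → g ≠ f → Y.src g ≠ x ∧ Y.tgt g ≠ x) :
    Nonempty (Con Y ∅ (sub X f')) := by
  have hpxy : c.p x = c.p y := by
    have h1 := c.coll e rfl
    simp only [ends, Sym2.eq_iff] at he
    rcases he with ⟨h, h'⟩ | ⟨h, h'⟩ <;> rw [← h, ← h', h1]
  have hor := c.hends f'
  rw [hf, hfe] at hor
  simp only [ends, Sym2.map_mk, Sym2.eq_iff] at hor
  let p : Y.V → Option X.V := fun v => if v = x then none else some (c.p v)
  have px : p x = none := by simp [p]
  have pn : ∀ v, v ≠ x → p v = some (c.p v) := by intro v hv; simp [p, hv]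
  obtain ⟨a, b, hab, ha, hb⟩ : ∃ a b, ((a = e ∧ b = f) ∨ (a = f ∧ b = e)) ∧
      (ends Y a).map p = s((none : Option X.V), some (X.tgt f')) ∧
      (ends Y b).map p = s(some (X.src f'), (none : Option X.V)) := by
    rcases hor with ⟨h, h'⟩ | ⟨h, h'⟩
    · refine ⟨f, e, Or.inr ⟨rfl, rfl⟩, ?_, ?_⟩
      · rw [hfe, Sym2.map_mk, px, pn u hxu.symm, h']
      · rw [he, Sym2.map_mk, px, pn y hxy.symm, ← hpxy, h, Sym2.eq_swap]
    · refine ⟨e, f, Or.inl ⟨rfl, rfl⟩, ?_, ?_⟩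
      · rw [he, Sym2.map_mk, px, pn y hxy.symm, ← hpxy, h]
      · rw [hfe, Sym2.map_mk, px, pn u hxu.symm, h', Sym2.eq_swap]
  let r : Option X.E → Y.E := fun g => match g with
    | none => a
    | some g => if g = f' then b else c.r g
  have rs : ∀ g, g ≠ f' → r (some g) = c.r g := by intro g hg; simp [r, hg]
  have rf : r (some f') = b := by simp [r]
  have hne : ∀ g, g ≠ f' → c.r g ≠ e ∧ c.r g ≠ f := by
    intro g hg
    exact ⟨c.rnot g, fun h => hg (c.rinj (h.trans hf.symm))⟩
  have hab' : a ≠ b := by rcases hab with ⟨rfl, rfl⟩ | ⟨rfl, rfl⟩; exacts [hef, hef.symm]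
  have hne' : ∀ g, g ≠ f' → c.r g ≠ a ∧ c.r g ≠ b := by
    intro g hg; have := hne g hg
    rcases hab with ⟨rfl, rfl⟩ | ⟨rfl, rfl⟩; exacts [this, this.symm]
  refine ⟨⟨p, r, ?_, ?_, by simp, ?_, by simp, ?_, ?_⟩⟩
  · rintro (_ | z)
    · exact ⟨x, px⟩
    · obtain ⟨v, rfl⟩ := c.psurj z
      by_cases hv : v = x
      · exact ⟨y, by rw [pn y hxy.symm, hv, hpxy]⟩
      · exact ⟨v, pn v hv⟩
  · rintro (_ | g) (_ | h) hgh
    · rfl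
    · by_cases hh : h = f'
      · subst hh; rw [rf] at hgh; exact absurd hgh hab'
      · rw [rs h hh] at hgh; exact absurd hgh.symm (hne' h hh).1
    · by_cases hh : g = f'
      · subst hh; rw [rf] at hgh; exact absurd hgh.symm hab'
      · rw [rs g hh] at hgh; exact absurd hgh (hne' g hh).1
    · by_cases hg : g = f' <;> by_cases hh : h = f'
      · rw [hg, hh]
      · subst hg; rw [rf, rs h hh] at hgh; exact absurd hgh.symm (hne' h hh).2
      · subst hh; rw [rf, rs g hg] at hgh; exact absurd hgh (hne' g hg).2
      · rw [rs g hg, rs h hh] at hgh; rw [c.rinj hgh]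
  · intro g _
    by_cases h1 : g = a
    · exact ⟨(none : Option X.E), h1.symm⟩
    · by_cases h2 : g = b
      · exact ⟨(some f' : Option X.E), by rw [rf, h2]⟩
      · have : g ≠ e ∧ g ≠ f := by
          rcases hab with ⟨rfl, rfl⟩ | ⟨rfl, rfl⟩; exacts [⟨h1, h2⟩, ⟨h2, h1⟩]
        obtain ⟨g', rfl⟩ := c.rsurj g this.1
        exact ⟨(some g' : Option X.E), rs g' (by rintro rfl; exact this.2 hf)⟩
  · rintro v v' hv S -
    have : v = v' := by
      by_cases h : v = x <;> by_cases h' : v' = x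
      · rw [h, h']
      · rw [h, px, pn v' h'] at hv; simp at hv
      · rw [h', px, pn v h] at hv; simp at hv
      · rw [pn v h, pn v' h'] at hv
        simp only [Option.some.injEq] at hv
        simp only [ends, Sym2.eq_iff] at he
        rcases c.kerE hv with h1 | h1 | h1
        · exact h1
        · grind
        · grind
    rw [this]
  · rintro (_ | g)
    · exact ha
    · by_cases hg : g = f'
      · subst hg; rw [rf, ends_sub_self]; exact hb
      · rw [rs g hg, ends_sub_some _ _ _ hg, ← c.hends, Sym2.map_map]
        have := hoth (c.r g) (hne g hg).1 (hne g hg).2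
        simp only [ends, Sym2.map_mk]
        rw [pn _ this.1, pn _ this.2]; rfl

end BG

namespace BG
open Multigraph

def W (k : ℕ) (X : Multigraph) : Prop :=
  ∃ (D : Multigraph) (w : D.E → ℕ), memDk k D ∧ IsWeakSubdivision X D w

lemma W_iso {k : ℕ} {X Y : Multigraph} (h : IsIso Y X) (hX : W k X) : W k Y := by
  obtain ⟨D, w, hD, hz, hi⟩ := hX
  exact ⟨D, w, hD, hz, Con.isIso_trans h hi⟩

lemma compl_ex {G : Multigraph} (A : Finset G.V) :
    ∃ B, G.cutEdges B = G.cutEdges A ∧ ∀ v, v ∈ B ↔ v ∉ A :=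
  ⟨Aᶜ, cut_compl A, fun _ => mem_compl⟩

lemma deg_le_two_of {G : Multigraph} {v : G.V}
    (hs : ∀ e e', G.src e = v → G.src e' = v → e = e')
    (ht : ∀ e e', G.tgt e = v → G.tgt e' = v → e = e') : G.deg v ≤ 2 := by
  have h1 : (univ.filter fun e => G.src e = v).card ≤ 1 := by
    rw [card_le_one]; intro a ha b hb
    simp only [mem_filter, mem_univ, true_and] at ha hb
    exact hs a b ha hb
  have h2 : (univ.filter fun e => G.tgt e = v).card ≤ 1 := by
    rw [card_le_one]; intro a ha b hb
    simp only [mem_filter, mem_univ, true_and] at ha hb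
    exact ht a b ha hb
  unfold Multigraph.deg
  omega

lemma deg_le_map {G D : Multigraph} {x : G.V} {v : D.V} (φ : G.E → D.E)
    (h1 : ∀ e, G.src e = x → D.src (φ e) = v)
    (h2 : ∀ e e', G.src e = x → G.src e' = x → φ e = φ e' → e = e')
    (h3 : ∀ e, G.tgt e = x → D.tgt (φ e) = v)
    (h4 : ∀ e e', G.tgt e = x → G.tgt e' = x → φ e = φ e' → e = e') : G.deg x ≤ D.deg v := by
  unfold Multigraph.deg
  apply add_le_add
  · apply card_le_card_of_injOn φ
    · intro e he; simp at he ⊢; exact h1 e he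
    · intro e he e' he' h; simp at he he'; exact h2 e e' he he' h
  · apply card_le_card_of_injOn φ
    · intro e he; simp at he ⊢; exact h3 e he
    · intro e he e' he' h; simp at he he'; exact h4 e e' he he' h

section nodes
variable (D : Multigraph) (w : D.E → ℕ)

lemma cn_int {e : D.E} {j : ℕ} (h0 : 0 < j) (h : j < w e) :
    chainNode D w e j = Sum.inr ⟨e, ⟨j - 1, by omega⟩⟩ := by
  simp [chainNode, h0, h]

lemma cn_zero (e : D.E) : chainNode D w e 0 = Sum.inl (Quot.mk _ (D.src e)) := by
  simp [chainNode]

lemma cn_end (e : D.E) {j : ℕ} (hj : w e ≤ j) :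
    chainNode D w e j = Sum.inl (Quot.mk _ (D.tgt e)) := by
  rw [chainNode, dif_neg (by omega)]
  split_ifs with h
  · congr 1
    exact Quot.sound ⟨e, by omega, rfl, rfl⟩
  · rfl

/-- a chain joining the two sides of a set has an edge in the cut -/
lemma chain_cross (A : Finset (subdivide D w).V) (e : D.E)
    (h : ¬ ((Sum.inl (Quot.mk _ (D.src e)) : (subdivide D w).V) ∈ A ↔
      (Sum.inl (Quot.mk _ (D.tgt e)) : (subdivide D w).V) ∈ A)) :
    ∃ i : Fin (w e), (⟨e, i⟩ : (subdivide D w).E) ∈ (subdivide D w).cutEdges A := by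
  by_contra hc
  push Not at hc
  have key : ∀ j, j ≤ w e → ((chainNode D w e 0 : (subdivide D w).V) ∈ A ↔
      (chainNode D w e j : (subdivide D w).V) ∈ A) := by
    intro j
    induction j with
    | zero => intro _; rfl
    | succ j ih =>
      intro hj
      rw [ih (by omega)]
      have := hc ⟨j, by omega⟩
      by_contra h'
      exact this (mem_cut.2 h')
  have := key (w e) le_rfl
  rw [cn_zero, cn_end D w e le_rfl] at this
  exact h this

def brA (A : Finset (subdivide D w).V) : Finset D.V :=
  univ.filter fun v => (Sum.inl (Quot.mk _ v) : (subdivide D w).V) ∈ A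

lemma brA_card (A : Finset (subdivide D w).V) :
    (D.cutEdges (brA D w A)).card ≤ ((subdivide D w).cutEdges A).card := by
  have : D.cutEdges (brA D w A) ⊆ ((subdivide D w).cutEdges A).image Sigma.fst := by
    intro e he
    rw [mem_cut] at he
    simp only [brA, mem_filter, mem_univ, true_and] at he
    obtain ⟨i, hi⟩ := chain_cross D w A e he
    exact mem_image.2 ⟨_, hi, rfl⟩
  exact (card_le_card this).trans card_image_le

lemma cn_eq_inr {e : D.E} {j : ℕ} {f : D.E} {i : Fin (w f - 1)}
    (h : chainNode D w e j = Sum.inr ⟨f, i⟩) : e = f ∧ j = i.val + 1 := by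
  rw [chainNode] at h
  split_ifs at h with h1 h2
  · simp only [Sum.inr.injEq, Sigma.mk.injEq] at h
    obtain ⟨rfl, h⟩ := h
    have := congrArg Fin.val (eq_of_heq h)
    simp at this
    exact ⟨rfl, by omega⟩

lemma deg_int (f : D.E) (i : Fin (w f - 1)) :
    (subdivide D w).deg (Sum.inr ⟨f, i⟩ : Quot (zeroRel D w) ⊕ (Σ f : D.E, Fin (w f - 1))) ≤ 2 := by
  apply deg_le_two_of
  · rintro ⟨e, j⟩ ⟨e', j'⟩ h h'
    obtain ⟨rfl, h1⟩ := cn_eq_inr D w (show chainNode D w e j = _ from h)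
    obtain ⟨rfl, h2⟩ := cn_eq_inr D w (show chainNode D w e' j' = _ from h')
    congr 1; ext; omega
  · rintro ⟨e, j⟩ ⟨e', j'⟩ h h'
    obtain ⟨rfl, h1⟩ := cn_eq_inr D w (show chainNode D w e (j + 1) = _ from h)
    obtain ⟨rfl, h2⟩ := cn_eq_inr D w (show chainNode D w e' (j' + 1) = _ from h')
    congr 1; ext; omega

lemma cn_eq_inl (hw : ∀ e, 1 ≤ w e) {e : D.E} {j : ℕ} {v : D.V}
    (h : chainNode D w e j = Sum.inl (Quot.mk _ v)) :
    (j = 0 ∧ D.src e = v) ∨ (w e ≤ j ∧ D.tgt e = v) := by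
  have hq : ∀ u : D.V, Quot.mk (zeroRel D w) u = Quot.mk _ v → u = v := by
    intro u hu
    have := congrArg (Quot.lift (id : D.V → D.V) (by
      rintro a b ⟨e, he, _⟩; have := hw e; omega)) hu
    exact this
  rw [chainNode] at h
  split_ifs at h with h1 h2
  · left; exact ⟨h2, hq _ (Sum.inl_injective h)⟩
  · right; exact ⟨by omega, hq _ (Sum.inl_injective h)⟩

lemma deg_br (hw : ∀ e, 1 ≤ w e) (v : D.V) :
    (subdivide D w).deg (Sum.inl (Quot.mk _ v) : Quot (zeroRel D w) ⊕ (Σ f : D.E, Fin (w f - 1)))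
      ≤ D.deg v := by
  apply deg_le_map (φ := (Sigma.fst : (Σ f : D.E, Fin (w f)) → D.E))
  · rintro ⟨e, j⟩ h
    rcases cn_eq_inl D w hw (show chainNode D w e j = _ from h) with h | h
    · exact h.2
    · have := j.2; omega
  · rintro ⟨e, j⟩ ⟨e', j'⟩ h h' hee
    simp only at hee
    subst hee
    have h1 := cn_eq_inl D w hw (show chainNode D w e j = _ from h)
    have h2 := cn_eq_inl D w hw (show chainNode D w e j' = _ from h')
    have := j.2
    have := j'.2
    congr 1; ext; omega
  · rintro ⟨e, j⟩ h
    rcases cn_eq_inl D w hw (show chainNode D w e (j + 1) = _ from h) with h | h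
    · omega
    · exact h.2
  · rintro ⟨e, j⟩ ⟨e', j'⟩ h h' hee
    simp only at hee
    subst hee
    have h1 := cn_eq_inl D w hw (show chainNode D w e (j + 1) = _ from h)
    have h2 := cn_eq_inl D w hw (show chainNode D w e (j' + 1) = _ from h')
    have := j.2
    have := j'.2
    congr 1; ext; omega

lemma deg_le3 (hw : ∀ e, 1 ≤ w e) (hD : ∀ v, D.deg v = 3) (x : (subdivide D w).V) :
    (subdivide D w).deg x ≤ 3 := by
  rcases x with q | ⟨f, i⟩
  · obtain ⟨v, rfl⟩ := Quot.exists_rep q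
    exact (deg_br D w hw v).trans (hD v).le
  · exact (deg_int D w f i).trans (by norm_num)

lemma sd_triv2 (hD : EC D 3) (h2 : EC (subdivide D w) 2) : Triv2 (subdivide D w) := by
  have main : ∀ A : Finset (subdivide D w).V, ((subdivide D w).cutEdges A).card = 2 →
      brA D w A = ∅ → ∀ v ∈ A, (subdivide D w).deg v = 2 := by
    intro A hA hb v hv
    apply le_antisymm
    · rcases v with q | ⟨f, i⟩
      · obtain ⟨v, rfl⟩ := Quot.exists_rep q
        have : v ∈ brA D w A := by simp [brA]; exact hv
        rw [hb] at this; simp at this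
      · exact deg_int D w f i
    · obtain ⟨_, h⟩ := cut_nontriv (card_pos.1 (by omega : 0 < ((subdivide D w).cutEdges A).card))
      obtain ⟨u, hu⟩ : ∃ u, u ∉ A := by
        by_contra hc; push Not at hc; exact h (by ext; simp [hc])
      exact deg_ge h2 (u := u) (by rintro rfl; exact hu hv)
  intro A hA
  have hle := brA_card D w A
  by_cases h0 : brA D w A = ∅
  · exact ⟨A, rfl, main A hA h0⟩
  · by_cases h1 : brA D w A = univ
    · obtain ⟨B, hB, hB'⟩ := compl_ex A
      refine ⟨B, hB, main _ (by rw [hB]; exact hA) ?_⟩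
      ext v
      have : v ∈ brA D w A := by rw [h1]; simp
      simp only [brA, mem_filter, mem_univ, true_and] at this ⊢
      exact iff_of_false (fun h => (hB' _).1 h this) (by simp)
    · have := hD _ (nonempty_iff_ne_empty.2 h0) h1
      omega

lemma sd_ec3 (hD : EC D 3) (hw : ∀ e, w e ≤ 1) : EC (subdivide D w) 3 := by
  have hV : ∀ x : (subdivide D w).V, ∃ v, x = (Sum.inl (Quot.mk _ v) : Quot (zeroRel D w) ⊕ (Σ f : D.E, Fin (w f - 1))) := by
    rintro (q | ⟨f, i⟩)
    · obtain ⟨v, rfl⟩ := Quot.exists_rep q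
      exact ⟨v, rfl⟩
    · have := hw f; have := i.2; omega
  intro A h1 h2
  refine (hD (brA D w A) ?_ ?_).trans (brA_card D w A)
  · obtain ⟨x, hx⟩ := h1
    obtain ⟨v, rfl⟩ := hV x
    exact ⟨v, by simp [brA]; exact hx⟩
  · intro h
    apply h2
    ext x
    obtain ⟨v, rfl⟩ := hV x
    have : v ∈ brA D w A := by rw [h]; simp
    simp only [brA, mem_filter, mem_univ, true_and] at this
    exact iff_of_true this (mem_univ _)

end nodes

/-- contraction as a weak subdivision -/
theorem con_sd (D : Multigraph) (Z : Set D.E) :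
    Nonempty (Con D Z (subdivide D (fun e => if e ∈ Z then 0 else 1))) := by
  set w : D.E → ℕ := fun e => if e ∈ Z then 0 else 1 with hw
  have w0 : ∀ e, w e = 0 ↔ e ∈ Z := by intro e; simp [hw]
  have w1 : ∀ e, w e ≤ 1 := by intro e; simp only [hw]; split_ifs <;> omega
  refine ⟨⟨fun v => (Sum.inl (Quot.mk _ v) : Quot (zeroRel D w) ⊕ (Σ f : D.E, Fin (w f - 1))),
    Sigma.fst, ?_, ?_, ?_, ?_, ?_, ?_, ?_⟩⟩
  · rintro (q | ⟨f, i⟩)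
    · obtain ⟨v, rfl⟩ := Quot.exists_rep q
      exact ⟨v, rfl⟩
    · have := w1 f; have := i.2; omega
  · rintro ⟨e, i⟩ ⟨e', i'⟩ h
    simp only at h
    subst h
    congr 1; ext
    have := w1 e; have := i.2; have := i'.2; omega
  · rintro ⟨e, i⟩ h
    have := (w0 e).2 h
    have := i.2; omega
  · intro g hg
    have := (w0 g).not.2 hg
    exact ⟨⟨g, ⟨0, by omega⟩⟩, rfl⟩
  · intro g hg
    congr 1
    exact Quot.sound ⟨g, (w0 g).2 hg, rfl, rfl⟩
  · intro u v h S hS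
    have h := Sum.inl_injective h
    have := congrArg (Quot.lift S (by
      rintro a b ⟨e, he, rfl, rfl⟩
      exact propext (hS e ((w0 e).1 he)))) h
    exact iff_of_eq this
  · rintro ⟨e, i⟩
    have h1 := w1 e
    have h2 := i.2
    have hi : i.val = 0 := by omega
    change _ = s(chainNode D w e i, chainNode D w e (i + 1))
    rw [hi, cn_zero, cn_end D w e (by omega)]; rfl

lemma W_of_con {k : ℕ} {D X : Multigraph} {Z : Set D.E} (hD : memDk k D) (c : Con D Z X)
    (hX : X.nE = X.nV + k) : W k X := by
  obtain ⟨d⟩ := con_sd D Z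
  have hi := Con.iso c d
  refine ⟨D, _, hD, ?_, hi⟩
  obtain ⟨i⟩ := hi
  have h1 := Fintype.card_congr i.vMap
  have h2 := c.card_E
  have h3 := hD.2.2.2
  have h4 : Fintype.card (subdivide D (fun e => if e ∈ Z then 0 else 1)).V =
      Fintype.card (Quot (zeroRel D (fun e => if e ∈ Z then 0 else 1))) := by
    have : IsEmpty (Σ f : D.E, Fin ((fun e => if e ∈ Z then 0 else 1) f - 1)) := by
      constructor
      rintro ⟨f, j⟩
      have := j.2
      simp only at this
      split_ifs at this <;> omega
    exact Fintype.card_congr (Equiv.sumEmpty (Quot (zeroRel D (fun e => if e ∈ Z then 0 else 1))) _)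
  rw [ZeroAcyclic]
  simp only [nV, nE] at *
  have h5 : (univ.filter fun e : D.E => (if e ∈ Z then 0 else 1) = 0).card = (univ.filter fun e => e ∈ Z).card := by
    congr 1; ext e; simp
  convert (_ : Fintype.card (Quot (zeroRel D (fun e => if e ∈ Z then 0 else 1))) + (univ.filter fun e => e ∈ Z).card = Fintype.card D.V) using 2
  omega

end BG

namespace BG
open Multigraph

section L2
variable (D : Multigraph) (w w' : D.E → ℕ) (c : D.E) (i : ℕ)

def nu (d : D.E) (j : ℕ) : Option (Quot (zeroRel D w) ⊕ (Σ f : D.E, Fin (w f - 1))) :=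
  if d = c then (if j ≤ i then some (chainNode D w c j) else if j = i + 1 then none
    else some (chainNode D w c (j - 1))) else some (chainNode D w d j)

lemma nu_ne {d : D.E} (h : d ≠ c) (j : ℕ) : nu D w c i d j = some (chainNode D w d j) := by
  simp [nu, h]
lemma nu_le {j : ℕ} (h : j ≤ i) : nu D w c i c j = some (chainNode D w c j) := by
  simp [nu, h]
lemma nu_mid : nu D w c i c (i + 1) = none := by
  simp [nu]
lemma nu_gt {j : ℕ} (h : i + 1 < j) : nu D w c i c j = some (chainNode D w c (j - 1)) := by
  rw [nu, if_pos rfl, if_neg (by omega), if_neg (by omega)]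

lemma zr_eq (hi : i < w c) (hwc : w' c = w c + 1) (hwd : ∀ d, d ≠ c → w' d = w d) :
    zeroRel D w' = zeroRel D w := by
  have key : ∀ d, w' d = 0 ↔ w d = 0 := by
    intro d
    by_cases h : d = c
    · subst h; omega
    · rw [hwd d h]
  funext u v
  simp only [zeroRel, key]

def pp (hz : zeroRel D w' = zeroRel D w) :
    Quot (zeroRel D w') ⊕ (Σ f : D.E, Fin (w' f - 1)) → Option (Quot (zeroRel D w) ⊕ (Σ f : D.E, Fin (w f - 1)))
  | Sum.inl q => some (Sum.inl (Quot.map id (fun _ _ h => hz ▸ h) q) :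
      Quot (zeroRel D w) ⊕ (Σ f : D.E, Fin (w f - 1)))
  | Sum.inr x => nu D w c i x.1 (x.2.val + 1)


lemma pp_cn (hi : i < w c) (hwc : w' c = w c + 1) (hwd : ∀ d, d ≠ c → w' d = w d) (hz : zeroRel D w' = zeroRel D w) (d : D.E) (j : ℕ) (hj : j ≤ w' d) :
    pp D w w' c i hz (chainNode D w' d j) = nu D w c i d j := by
  by_cases h0 : j = 0
  · subst h0
    rw [cn_zero]
    by_cases h : d = c
    · subst h; rw [nu_le _ _ _ _ (Nat.zero_le _), cn_zero]; rfl
    · rw [nu_ne _ _ _ _ h, cn_zero]; rfl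
  · by_cases h1 : j < w' d
    · rw [cn_int D w' (by omega) h1]
      have : j - 1 + 1 = j := by omega
      simp only [pp, this]
    · have hj' : j = w' d := by omega
      rw [cn_end D w' d (by omega)]
      by_cases h : d = c
      · subst h; rw [nu_gt _ _ _ _ (by omega), cn_end D w d (by omega)]; rfl
      · rw [nu_ne _ _ _ _ h, cn_end D w d (by rw [← hwd d h]; omega)]; rfl

lemma pp_inr (hi : i < w c) (hwc : w' c = w c + 1) (hwd : ∀ d, d ≠ c → w' d = w d) (hz : zeroRel D w' = zeroRel D w) (d : D.E) (j : Fin (w' d - 1)) :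
    (d = c ∧ j.val = i ∧ pp D w w' c i hz (Sum.inr ⟨d, j⟩) = none) ∨
    (∃ j2 : Fin (w d - 1), pp D w w' c i hz (Sum.inr ⟨d, j⟩) = some (Sum.inr ⟨d, j2⟩ :
      Quot (zeroRel D w) ⊕ (Σ f : D.E, Fin (w f - 1))) ∧
      ((d ≠ c ∧ j2.val = j.val) ∨ (d = c ∧ j.val < i ∧ j2.val = j.val) ∨
        (d = c ∧ i < j.val ∧ j2.val + 1 = j.val))) := by
  have hj := j.2
  by_cases h : d = c
  · subst h
    rcases lt_trichotomy j.val i with h1 | h1 | h1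
    · right
      refine ⟨⟨j.val, by omega⟩, ?_, Or.inr (Or.inl ⟨rfl, h1, rfl⟩)⟩
      simp only [pp]
      rw [nu_le _ _ _ _ (by omega), cn_int D w (by omega) (by omega)]
      rfl
    · left
      refine ⟨rfl, h1, ?_⟩
      simp only [pp, h1]
      rw [nu_mid]
    · right
      refine ⟨⟨j.val - 1, by omega⟩, ?_, Or.inr (Or.inr ⟨rfl, h1, by simp; omega⟩)⟩
      simp only [pp]
      rw [nu_gt _ _ _ _ (by omega), cn_int D w (by omega) (by omega)]
      rfl
  · right
    have := hwd d h
    refine ⟨⟨j.val, by omega⟩, ?_, Or.inl ⟨h, rfl⟩⟩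
    simp only [pp]
    rw [nu_ne _ _ _ _ h, cn_int D w (by omega) (by omega)]
    rfl

lemma pp_inj (hi : i < w c) (hwc : w' c = w c + 1) (hwd : ∀ d, d ≠ c → w' d = w d) (hz : zeroRel D w' = zeroRel D w) : Function.Injective (pp D w w' c i hz) := by
  rintro (q | ⟨d, j⟩) (q' | ⟨d', j'⟩) h
  · simp only [pp, Option.some.injEq] at h
    have h := Sum.inl_injective h
    congr 1
    have hinv : ∀ q, Quot.map id (fun a b h => hz.symm ▸ h) (Quot.map id (fun a b h => hz ▸ h : ∀ a b, zeroRel D w' a b → zeroRel D w (id a) (id b)) q) = q := by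
      rintro ⟨a⟩; rfl
    rw [← hinv q, ← hinv q', h]
  · rcases pp_inr D w w' c i hi hwc hwd hz d' j' with ⟨_, _, h'⟩ | ⟨_, h', _⟩
    · rw [h'] at h; simp [pp] at h
    · rw [h'] at h; simp only [pp, Option.some.injEq] at h; exact absurd h (by intro h; cases h)
  · rcases pp_inr D w w' c i hi hwc hwd hz d j with ⟨_, _, h'⟩ | ⟨_, h', _⟩
    · rw [h'] at h; simp [pp] at h
    · rw [h'] at h; simp only [pp, Option.some.injEq] at h; exact absurd h (by intro h; cases h)
  · rcases pp_inr D w w' c i hi hwc hwd hz d j with ⟨h0, h1, h'⟩ | ⟨j2, h', h1⟩ <;>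
    rcases pp_inr D w w' c i hi hwc hwd hz d' j' with ⟨h3, h2, h''⟩ | ⟨j2', h'', h2⟩
    · subst h3; subst h0; congr 2; ext; omega
    · rw [h', h''] at h; simp at h
    · rw [h', h''] at h; simp at h
    · rw [h', h''] at h
      simp only [Option.some.injEq] at h
      have h := Sum.inr_injective h
      obtain rfl : d = d' := congrArg Sigma.fst h
      have h := eq_of_heq (Sigma.mk.inj h).2
      subst h
      congr 2; ext; grind

lemma pp_surj (hi : i < w c) (hwc : w' c = w c + 1) (hwd : ∀ d, d ≠ c → w' d = w d) (hz : zeroRel D w' = zeroRel D w) : Function.Surjective (pp D w w' c i hz) := by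
  rintro (_ | (q | ⟨d, j⟩))
  · refine ⟨Sum.inr ⟨c, ⟨i, by omega⟩⟩, ?_⟩
    simp only [pp]; rw [nu_mid]
  · obtain ⟨v, rfl⟩ := Quot.exists_rep q
    exact ⟨Sum.inl (Quot.mk _ v), rfl⟩
  · have hj := j.2
    by_cases h : d = c
    · subst h
      by_cases h1 : j.val < i
      · refine ⟨Sum.inr ⟨d, ⟨j.val, by omega⟩⟩, ?_⟩
        simp only [pp]
        rw [nu_le _ _ _ _ (by omega), cn_int D w (by omega) (by omega)]; rfl
      · refine ⟨Sum.inr ⟨d, ⟨j.val + 1, by omega⟩⟩, ?_⟩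
        simp only [pp]
        rw [nu_gt _ _ _ _ (by omega), cn_int D w (by omega) (by omega)]; rfl
    · have := hwd d h
      refine ⟨Sum.inr ⟨d, ⟨j.val, by omega⟩⟩, ?_⟩
      simp only [pp]
      rw [nu_ne _ _ _ _ h, cn_int D w (by omega) (by omega)]; rfl

lemma rr_lt (hi : i < w c) (hwc : w' c = w c + 1) (hwd : ∀ d, d ≠ c → w' d = w d) (d : D.E) (j : Fin (w d)) : (if d = c ∧ i < j.val then j.val + 1 else j.val) < w' d := by
  have := j.2
  by_cases h : d = c
  · subst h; split_ifs <;> omega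
  · have := hwd d h; rw [if_neg (by tauto)]; omega

def rr (h : ∀ (d : D.E) (j : Fin (w d)), (if d = c ∧ i < j.val then j.val + 1 else j.val) < w' d)
    (h' : i + 1 < w' c) : Option (Σ f : D.E, Fin (w f)) → Σ f : D.E, Fin (w' f)
  | none => ⟨c, ⟨i + 1, h'⟩⟩
  | some x => ⟨x.1, ⟨_, h x.1 x.2⟩⟩

theorem subdiv_sub (hi : i < w c) (hwc : w' c = w c + 1) (hwd : ∀ d, d ≠ c → w' d = w d) : Nonempty (Con (subdivide D w') ∅
    (sub (subdivide D w) (⟨c, ⟨i, hi⟩⟩ : Σ f : D.E, Fin (w f)))) := by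
  have hz := zr_eq D w w' c i hi hwc hwd
  have h1 := rr_lt D w w' c i hi hwc hwd
  have h2 : i + 1 < w' c := by omega
  refine ⟨⟨pp D w w' c i hz, rr D w w' c i h1 h2, pp_surj D w w' c i hi hwc hwd hz, ?_, fun _ h => h, ?_, fun _ h => h.elim, ?_, ?_⟩⟩
  · rintro (_ | ⟨d, j⟩) (_ | ⟨d', j'⟩) h
    · rfl
    · simp only [rr] at h
      obtain rfl : c = d' := congrArg Sigma.fst h
      have h := congrArg Fin.val (eq_of_heq (Sigma.mk.inj h).2)
      simp only [true_and] at h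
      split_ifs at h <;> omega
    · simp only [rr] at h
      obtain rfl : d = c := congrArg Sigma.fst h
      have h := congrArg Fin.val (eq_of_heq (Sigma.mk.inj h).2)
      simp only [true_and] at h
      split_ifs at h <;> omega
    · simp only [rr] at h
      obtain rfl : d = d' := congrArg Sigma.fst h
      have h := congrArg Fin.val (eq_of_heq (Sigma.mk.inj h).2)
      simp only at h
      congr 2; ext
      by_cases hh : d = c
      · simp only [hh, true_and] at h
        split_ifs at h <;> omega
      · simp only [hh, false_and, if_false] at h; exact h
  · rintro ⟨d, j⟩ -
    have hj := j.2
    by_cases h : d = c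
    · subst h
      rcases lt_trichotomy j.val (i+1) with h3 | h3 | h3
      · refine ⟨(some ⟨d, ⟨j.val, by omega⟩⟩ : Option (Σ f : D.E, Fin (w f))), ?_⟩
        simp only [rr]; congr 1; ext; simp only [true_and]; rw [if_neg (by omega)]
      · refine ⟨(none : Option (Σ f : D.E, Fin (w f))), ?_⟩
        simp only [rr]; congr 1; ext; simp [h3]
      · refine ⟨(some ⟨d, ⟨j.val - 1, by omega⟩⟩ : Option (Σ f : D.E, Fin (w f))), ?_⟩
        simp only [rr]; congr 1; ext; simp only [true_and]; rw [if_pos (by omega)]; omega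
    · have := hwd d h
      refine ⟨(some ⟨d, ⟨j.val, by omega⟩⟩ : Option (Σ f : D.E, Fin (w f))), ?_⟩
      simp only [rr]; congr 1; ext; simp [h]
  · rintro u v h S -
    rw [pp_inj D w w' c i hi hwc hwd hz h]
  · have key : ∀ (d : D.E) (j : ℕ) (hj : j < w' d),
        Sym2.map (pp D w w' c i hz) (ends (subdivide D w') (⟨d, ⟨j, hj⟩⟩ : Σ f : D.E, Fin (w' f)))
          = s(nu D w c i d j, nu D w c i d (j + 1)) := by
      intro d j hj
      change s(pp D w w' c i hz (chainNode D w' d j), pp D w w' c i hz (chainNode D w' d (j+1))) = _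
      rw [pp_cn D w w' c i hi hwc hwd hz d j hj.le, pp_cn D w w' c i hi hwc hwd hz d (j+1) hj]
    rintro (_ | ⟨d, j⟩)
    · refine (key c (i+1) h2).trans ?_
      rw [nu_mid, nu_gt _ _ _ _ (by omega)]; rfl
    · refine (key d _ (h1 d j)).trans ?_
      have hj := j.2
      by_cases h : d = c
      · subst h
        simp only [true_and]
        by_cases h3 : j.val = i
        · subst h3
          rw [if_neg (by omega), nu_mid, nu_le _ _ _ _ le_rfl]
          exact (ends_sub_self (subdivide D w) (⟨d, j⟩ : Σ f : D.E, Fin (w f))).symm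
        · refine Eq.trans ?_ (ends_sub_some (subdivide D w) _ (⟨d, j⟩ : Σ f : D.E, Fin (w f)) ?_).symm
          · by_cases h4 : i < j.val
            · rw [if_pos h4, nu_gt _ _ _ _ (by omega), nu_gt _ _ _ _ (by omega)]
              simp only [Nat.add_sub_cancel]; rfl
            · rw [if_neg h4, nu_le _ _ _ _ (by omega), nu_le _ _ _ _ (by omega)]; rfl
          · intro hh
            have hh := congrArg Fin.val (eq_of_heq (Sigma.mk.inj hh).2)
            exact h3 hh
      · rw [if_neg (by tauto), nu_ne _ _ _ _ h, nu_ne _ _ _ _ h]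
        refine (ends_sub_some (subdivide D w) _ (⟨d, j⟩ : Σ f : D.E, Fin (w f)) ?_).symm
        intro hh
        exact h (congrArg Sigma.fst hh)

end L2

theorem W_sub {k : ℕ} {X : Multigraph} (hX : W k X) (f : X.E) : W k (sub X f) := by
  obtain ⟨D, w, hD, hz, hi⟩ := hX
  obtain ⟨d⟩ := Con.of_isIso (Con.isIso_symm hi)
  obtain ⟨s⟩ := subIso d f
  have hs := s.to_isIso
  generalize d.r f = f' at hs
  obtain ⟨c, ⟨i, hi⟩⟩ := f'
  let w' : D.E → ℕ := fun d => if d = c then w c + 1 else w d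
  have hwc : w' c = w c + 1 := by simp [w']
  have hwd : ∀ d, d ≠ c → w' d = w d := by intro d h; simp [w', h]
  have hzr := zr_eq D w w' c i hi hwc hwd
  obtain ⟨t⟩ := subdiv_sub D w w' c i hi hwc hwd
  refine ⟨D, w', hD, ?_, Con.isIso_trans (Con.isIso_symm hs) (Con.isIso_symm t.to_isIso)⟩
  unfold ZeroAcyclic at hz ⊢
  have key : ∀ d, w' d = 0 ↔ w d = 0 := by
    intro d
    by_cases h : d = c
    · subst h; omega
    · rw [hwd d h]
  simp only [key]
  rw [← hz]
  rw [hzr]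

end BG

namespace BG
open Multigraph

/-- expansion of an edge at `v`, moving one end of `a` and one of `b` -/
abbrev xpd (X : Multigraph) (v : X.V) (a b : X.E) : Multigraph where
  V := Option X.V
  E := Option X.E
  src := fun g => match g with
    | none => none
    | some g => if (g = a ∨ g = b) ∧ X.src g = v then none else some (X.src g)
  tgt := fun g => match g with
    | none => some v
    | some g => if (g = a ∨ g = b) ∧ X.src g ≠ v ∧ X.tgt g = v then none else some (X.tgt g)

def xpdCon (X : Multigraph) (v : X.V) (a b : X.E) :
    Con (xpd X v a b) ({(none : Option X.E)} : Set (Option X.E)) X where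
  p := fun (u : Option X.V) => match u with
    | none => v
    | some u => u
  r := fun g => (some g : Option X.E)
  psurj := fun u => ⟨(some u : Option X.V), rfl⟩
  rinj := fun a b h => by simpa using (h : (some a : Option X.E) = some b)
  rnot := fun x h => by
    have : (some x : Option X.E) = none := h
    simp at this
  rsurj := by
    rintro (_ | g) h
    · exact absurd rfl h
    · exact ⟨g, rfl⟩
  coll := by
    intro g hg
    have : g = (none : Option X.E) := hg
    subst this; rfl
  ker := by
    intro u v' h S hS
    have := hS (none : Option X.E) rfl
    change S (none : Option X.V) ↔ S (some v : Option X.V) at this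
    rcases u with _ | u <;> rcases v' with _ | v' <;> simp at h
    · rfl
    · subst h; exact this
    · subst h; exact this.symm
    · subst h; rfl
  hends := by
    intro g
    simp only [ends, Sym2.map_mk]
    congr 2
    · split
      · rename_i h; split_ifs at h with h1
        · exact h1.2.symm
      · rename_i h; split_ifs at h with h1
        simpa using h.symm
    · split
      · rename_i h; split_ifs at h with h1
        · exact h1.2.2.symm
      · rename_i h; split_ifs at h with h1
        simpa using h.symm

lemma xpd_cut (X : Multigraph) (v : X.V) (a b : X.E)
    (ha : X.src a = v ∨ X.tgt a = v) (hb : X.src b = v ∨ X.tgt b = v)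
    (A : Finset (xpd X v a b).V) (hA : (none : Option X.E) ∈ (xpd X v a b).cutEdges A) :
    ∃ S : Finset X.V, v ∉ S ∧
      (∀ g, g ≠ a → g ≠ b → (((xpdCon X v a b).r g) ∈ (xpd X v a b).cutEdges A ↔ g ∈ X.cutEdges S)) ∧
      (∀ g, g = a ∨ g = b → (((xpdCon X v a b).r g) ∈ (xpd X v a b).cutEdges A ↔ g ∉ X.cutEdges S)) := by
  have main : ∀ A : Finset (xpd X v a b).V, (none : Option X.V) ∈ A → (some v : Option X.V) ∉ A →
      ∃ S : Finset X.V, v ∉ S ∧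
      (∀ g, g ≠ a → g ≠ b → (((xpdCon X v a b).r g) ∈ (xpd X v a b).cutEdges A ↔ g ∈ X.cutEdges S)) ∧
      (∀ g, g = a ∨ g = b → (((xpdCon X v a b).r g) ∈ (xpd X v a b).cutEdges A ↔ g ∉ X.cutEdges S)) := by
    intro A h1 h2
    refine ⟨univ.filter fun u => (some u : Option X.V) ∈ A, by simpa using h2, ?_, ?_⟩
    · intro g hga hgb
      rw [mem_cut, mem_cut]
      have e1 : (xpd X v a b).src ((xpdCon X v a b).r g) = (some (X.src g) : Option X.V) := by
        simp [xpd, xpdCon, hga, hgb]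
      have e2 : (xpd X v a b).tgt ((xpdCon X v a b).r g) = (some (X.tgt g) : Option X.V) := by
        simp [xpd, xpdCon, hga, hgb]
      rw [e1, e2]
      simp
    · intro g hg
      have hgv : X.src g = v ∨ X.tgt g = v := by rcases hg with rfl | rfl <;> assumption
      rw [mem_cut, mem_cut]
      by_cases hs : X.src g = v
      · have e1 : (xpd X v a b).src ((xpdCon X v a b).r g) = (none : Option X.V) := by
          simp [xpd, xpdCon, hg, hs]
        have e2 : (xpd X v a b).tgt ((xpdCon X v a b).r g) = (some (X.tgt g) : Option X.V) := by
          simp [xpd, xpdCon, hs]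
        rw [e1, e2]
        simp [h1, h2, hs]
      · have ht : X.tgt g = v := by tauto
        have e1 : (xpd X v a b).src ((xpdCon X v a b).r g) = (some (X.src g) : Option X.V) := by
          simp [xpd, xpdCon, hs]
        have e2 : (xpd X v a b).tgt ((xpdCon X v a b).r g) = (none : Option X.V) := by
          simp [xpd, xpdCon, hg, hs, ht]
        rw [e1, e2]
        simp [h1, h2, ht]
  have h := mem_cut.1 hA
  change ¬ ((none : Option X.V) ∈ A ↔ (some v : Option X.V) ∈ A) at h
  by_cases h1 : (none : Option X.V) ∈ A
  · exact main A h1 (by tauto)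
  · obtain ⟨B, hB, hB'⟩ := compl_ex A
    rw [← hB]
    refine main B ((hB' _).2 h1) (fun h3 => (hB' _).1 h3 ?_)
    tauto

lemma expand_ex (X : Multigraph) (v : X.V) (a b : X.E)
    (ha : X.src a = v ∨ X.tgt a = v) (hb : X.src b = v ∨ X.tgt b = v) :
    ∃ (H : Multigraph) (n : H.E) (c : Con H {n} X), H.src n ≠ H.tgt n ∧
      ∀ A : Finset H.V, n ∈ H.cutEdges A → ∃ S : Finset X.V, v ∉ S ∧
      (∀ g, g ≠ a → g ≠ b → (c.r g ∈ H.cutEdges A ↔ g ∈ X.cutEdges S)) ∧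
      (∀ g, g = a ∨ g = b → (c.r g ∈ H.cutEdges A ↔ g ∉ X.cutEdges S)) :=
  ⟨xpd X v a b, (none : Option X.E), xpdCon X v a b, by simp [xpd], xpd_cut X v a b ha hb⟩

lemma expand_ec3 {X : Multigraph} (hX : EC X 3) (v : X.V) {a b : X.E} (hab : a ≠ b)
    (ha : X.src a = v ∨ X.tgt a = v) (hb : X.src b = v ∨ X.tgt b = v)
    (hgood : ¬ ∃ S, v ∉ S ∧ (X.cutEdges S).card = 3 ∧ a ∈ X.cutEdges S ∧ b ∈ X.cutEdges S) :
    ∃ (H : Multigraph) (n : H.E) (_ : Con H {n} X), H.src n ≠ H.tgt n ∧ EC H 3 := by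
  obtain ⟨H, n, c, hn, hc⟩ := expand_ex X v a b ha hb
  refine ⟨H, n, c, hn, ?_⟩
  intro A h1 h2
  by_cases hA : n ∈ H.cutEdges A
  · obtain ⟨S, hv, hS1, hS2⟩ := hc A hA
    by_contra hlt
    apply hgood
    refine ⟨S, hv, ?_⟩
    set F := univ.filter fun g => c.r g ∈ H.cutEdges A with hF
    have hFc : F.card ≤ 1 := by
      have h3 : F.image c.r ⊆ (H.cutEdges A).erase n := by
        intro x hx
        obtain ⟨g, hg, rfl⟩ := mem_image.1 hx
        rw [mem_erase]
        exact ⟨c.rnot g, by simpa [hF] using hg⟩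
      have := card_le_card h3
      rw [card_image_of_injective _ c.rinj, card_erase_of_mem hA] at this
      omega
    have hsub : X.cutEdges S ⊆ F ∪ {a, b} := by
      intro g hg
      by_cases h3 : g = a ∨ g = b
      · simp only [mem_union, mem_insert, mem_singleton]; exact Or.inr h3
      · have := (hS1 g (by tauto) (by tauto)).2 hg
        simp [hF, this]
    have hSn : S.Nonempty := by
      by_contra h3
      rw [not_nonempty_iff_eq_empty] at h3
      have h4 : ∀ g, g ∉ X.cutEdges S := by
        intro g; rw [mem_cut]; simp [h3]
      have h5 : ({a, b} : Finset X.E) ⊆ F := by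
        intro g hg
        have hg : g = a ∨ g = b := by simpa using hg
        have := (hS2 g hg).2 (h4 g)
        simp [hF, this]
      have := card_le_card h5
      rw [card_pair hab] at this
      omega
    have h3 := hX S hSn (by rintro rfl; exact hv (mem_univ _))
    have h4 : (F ∪ {a, b}).card ≤ 3 := (card_union_le _ _).trans (by rw [card_pair hab]; omega)
    have h5 := eq_of_subset_of_card_le hsub (by omega)
    refine ⟨by rw [h5]; rw [h5] at h3; omega, by rw [h5]; simp, by rw [h5]; simp⟩
  · obtain ⟨B, rfl⟩ := c.sat A (by rintro g rfl; exact hA)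
    rw [c.card_cut_pre]
    apply hX
    · obtain ⟨u, hu⟩ := h1
      exact ⟨c.p u, by simpa using hu⟩
    · rintro rfl; apply h2; simp

lemma cut_mono {X : Multigraph} {v : X.V} {g : X.E} {S T : Finset X.V}
    (hg : X.src g = v ∨ X.tgt g = v) (h1 : v ∉ S) (h2 : v ∉ T) (h3 : S ⊆ T)
    (h4 : g ∈ X.cutEdges S) : g ∈ X.cutEdges T := by
  rw [mem_cut] at h4 ⊢
  rcases hg with hg | hg
  · rw [hg] at h4 ⊢
    have : X.tgt g ∈ S := by by_contra h; exact h4 (iff_of_false h1 h)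
    exact fun h => h2 (h.2 (h3 this))
  · rw [hg] at h4 ⊢
    have : X.src g ∈ S := by by_contra h; exact h4 (iff_of_false h h1)
    exact fun h => h2 (h.1 (h3 this))

lemma good_pair {X : Multigraph} (hX : EC X 3) (v : X.V) (hv : 4 ≤ X.deg v) :
    ∃ a b : X.E, a ≠ b ∧ (X.src a = v ∨ X.tgt a = v) ∧ (X.src b = v ∨ X.tgt b = v) ∧
    ¬ ∃ S, v ∉ S ∧ (X.cutEdges S).card = 3 ∧ a ∈ X.cutEdges S ∧ b ∈ X.cutEdges S := by
  by_cases hl : ∃ l, X.src l = v ∧ X.tgt l = v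
  · obtain ⟨l, hl1, hl2⟩ := hl
    obtain ⟨b, hb, hb'⟩ : ∃ b, b ≠ l ∧ (X.src b = v ∨ X.tgt b = v) := by
      by_contra hc
      push Not at hc
      have : X.deg v ≤ 2 := by
        apply deg_le_two_of
        · intro e e' h h'
          have h1 : e = l := by by_contra h1; exact (hc e h1).1 h
          have h2 : e' = l := by by_contra h1; exact (hc e' h1).1 h'
          rw [h1, h2]
        · intro e e' h h'
          have h1 : e = l := by by_contra h1; exact (hc e h1).2 h
          have h2 : e' = l := by by_contra h1; exact (hc e' h1).2 h'
          rw [h1, h2]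
      omega
    refine ⟨l, b, hb.symm, Or.inl hl1, hb', ?_⟩
    rintro ⟨S, _, _, h, _⟩
    exact nonloop_of_cut h (hl1.trans hl2.symm)
  · push Not at hl
    set N := univ.filter fun e => X.src e = v ∨ X.tgt e = v with hN
    have hmem : ∀ e, e ∈ N ↔ X.src e = v ∨ X.tgt e = v := by intro e; simp [hN]
    have hNc : 4 ≤ N.card := by
      rw [hN, filter_or, card_union_of_disjoint]
      · exact hv
      · rw [disjoint_filter]
        intro e _ h h'
        exact hl e h h'
    obtain ⟨a, haN⟩ : N.Nonempty := card_pos.1 (by omega)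
    have h3 : 2 < (N.erase a).card := by rw [card_erase_of_mem haN]; omega
    obtain ⟨b, hb, c, hc, d, hd, hbc, hbd, hcd⟩ := two_lt_card.1 h3
    rw [mem_erase, hmem] at hb hc hd
    rw [hmem] at haN
    by_contra hcon
    push Not at hcon
    obtain ⟨Sb, vb, cb, ab, bb⟩ := hcon a b hb.1.symm haN hb.2
    obtain ⟨Sc, vc, cc, ac, bc⟩ := hcon a c hc.1.symm haN hc.2
    obtain ⟨Sd, vd, cd, ad, bd⟩ := hcon a d hd.1.symm haN hd.2
    have mono : ∀ (g : X.E) (S T : Finset X.V), (X.src g = v ∨ X.tgt g = v) → v ∉ S → v ∉ T → S ⊆ T →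
        g ∈ X.cutEdges S → g ∈ X.cutEdges T := by
      exact fun g S T hg h1 h2 h3 h4 => cut_mono hg h1 h2 h3 h4
    obtain ⟨u, hu⟩ : ∃ u, ∀ S, v ∉ S → a ∈ X.cutEdges S → u ∈ S := by
      rcases haN with h | h
      · refine ⟨X.tgt a, fun S h1 h2 => ?_⟩
        rw [mem_cut, h] at h2; by_contra h3; exact h2 (by simp only [h1, h3])
      · refine ⟨X.src a, fun S h1 h2 => ?_⟩
        rw [mem_cut, h] at h2; by_contra h3; exact h2 (by simp only [h1, h3])
    have ub := hu Sb vb ab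
    have uc := hu Sc vc ac
    have ud := hu Sd vd ad
    have step : ∀ S T : Finset X.V, u ∈ S → u ∈ T → v ∉ S → (X.cutEdges S).card ≤ 3 →
        (X.cutEdges T).card ≤ 3 → (X.cutEdges (S ∪ T)).card ≤ 3 := by
      intro S T h1 h2 h3 h4 h5
      have h6 := cut_submod S T
      have h7 := hX (S ∩ T) ⟨u, by simp [h1, h2]⟩ (by
        intro h; have : v ∈ S ∩ T := by rw [h]; simp
        simp at this; exact h3 this.1)
      omega
    have s1 := step Sb Sc ub uc vb cb.le cc.le
    have s2 := step (Sb ∪ Sc) Sd (by simp [ub]) ud (by simp [vb, vc]) s1 cd.le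
    have vT : v ∉ Sb ∪ Sc ∪ Sd := by simp [vb, vc, vd]
    have h4 : ({a, b, c, d} : Finset X.E) ⊆ X.cutEdges (Sb ∪ Sc ∪ Sd) := by
      intro g hg
      simp only [mem_insert, mem_singleton] at hg
      rcases hg with rfl | rfl | rfl | rfl
      · exact mono _ Sb _ haN vb vT (fun x hx => mem_union_left _ (mem_union_left _ hx)) ab
      · exact mono _ Sb _ hb.2 vb vT (fun x hx => mem_union_left _ (mem_union_left _ hx)) bb
      · exact mono _ Sc _ hc.2 vc vT (fun x hx => mem_union_left _ (mem_union_right _ hx)) bc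
      · exact mono _ Sd _ hd.2 vd vT (fun x hx => mem_union_right _ hx) bd
    have h5 := card_le_card h4
    have h6 : ({a, b, c, d} : Finset X.E).card = 4 := by
      rw [card_insert_of_notMem, card_insert_of_notMem, card_pair hcd]
      · simp [hbc, hbd]
      · simp [hb.1.symm, hc.1.symm, hd.1.symm]
    omega

lemma deg_ge3 {X : Multigraph} {k : ℕ} (hk : 1 ≤ k) (hX : EC X 3) (hE : X.nE = X.nV + k) (v : X.V) :
    3 ≤ X.deg v := by
  by_cases h : ∃ u, u ≠ v
  · obtain ⟨u, hu⟩ := h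
    exact deg_ge hX hu
  · push Not at h
    have := single_univ h
    omega

theorem T1con {k : ℕ} (hk : 1 ≤ k) : ∀ (m : ℕ) (X : Multigraph), 2 * k - X.nV = m → EC X 3 →
    X.nE = X.nV + k → ∃ (D : Multigraph) (Z : Set D.E), memDk k D ∧ Nonempty (Con D Z X) := by
  intro m
  induction m using Nat.strong_induction_on with
  | _ m ih =>
    intro X hm hX hE
    have hd := deg_ge3 hk hX hE
    by_cases h : ∀ v, X.deg v = 3
    · exact ⟨X, ∅, ⟨conn_of hX, h, ec3_iff.1 hX, hE⟩, ⟨Con.refl X⟩⟩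
    · push Not at h
      obtain ⟨v, hv⟩ := h
      have hv4 : 4 ≤ X.deg v := by have := hd v; omega
      have hlt : 3 * X.nV < 2 * X.nE := by
        rw [← handshake]
        have : ∑ _w : X.V, 3 < ∑ w, X.deg w :=
          sum_lt_sum (fun w _ => hd w) ⟨v, mem_univ _, hv4⟩
        simpa [nV, mul_comm] using this
      obtain ⟨a, b, hab, ha, hb, hg⟩ := good_pair hX v hv4
      obtain ⟨H, n, c, hn, hH⟩ := expand_ec3 hX v hab ha hb hg
      have h1 := c.card_V hn
      have h2 := c.card_E1
      obtain ⟨D, Z, hD, ⟨d⟩⟩ := ih (2 * k - H.nV) (by omega) H rfl hH (by omega)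
      exact ⟨D, _, hD, ⟨d.comp c⟩⟩

theorem T1 {k : ℕ} (hk : 1 ≤ k) {X : Multigraph} (hX : EC X 3) (hE : X.nE = X.nV + k) : W k X := by
  obtain ⟨D, Z, hD, ⟨d⟩⟩ := T1con hk _ X rfl hX hE
  exact W_of_con hD d hE

end BG

namespace BG
open Multigraph

lemma two_cut {X : Multigraph} (h2 : EC X 2) (h3 : ¬ EC X 3) :
    ∃ A, (X.cutEdges A).card = 2 := by
  unfold EC at h3
  push Not at h3
  obtain ⟨A, h, h', h''⟩ := h3
  exact ⟨A, by have := h2 A h h'; omega⟩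

lemma ends_cut_single {X : Multigraph} {x : X.V} {e : X.E} (h : e ∈ X.cutEdges {x}) :
    ∃ y, x ≠ y ∧ ends X e = s(x, y) := by
  rw [mem_cut, mem_singleton, mem_singleton] at h
  by_cases h1 : X.src e = x
  · exact ⟨X.tgt e, fun h2 => h (iff_of_true h1 h2.symm), by rw [ends, h1]⟩
  · have h2 : X.tgt e = x := by by_contra h2; exact h (iff_of_false h1 h2)
    exact ⟨X.src e, fun h3 => h1 h3.symm, by rw [ends, h2, Sym2.eq_swap]⟩

lemma deg2_inc {X : Multigraph} {x : X.V} (hd : X.deg x = 2) (hc : 2 ≤ (X.cutEdges {x}).card)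
    (g : X.E) (hg : X.src g = x ∨ X.tgt g = x) : g ∈ X.cutEdges {x} := by
  have h1 : X.cutEdges {x} ⊆ (univ.filter fun e => X.src e = x) ∪ (univ.filter fun e => X.tgt e = x) := by
    intro e he
    rw [mem_cut, mem_singleton, mem_singleton] at he
    simp only [mem_union, mem_filter, mem_univ, true_and]
    by_contra h
    push Not at h
    exact he (iff_of_false h.1 h.2)
  have h2 := card_union_le (univ.filter fun e => X.src e = x) (univ.filter fun e => X.tgt e = x)
  have h3 : (univ.filter fun e => X.src e = x).card + (univ.filter fun e => X.tgt e = x).card = 2 := hd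
  rw [eq_of_subset_of_card_le h1 (by omega)]
  simpa using hg

theorem a_back {k : ℕ} (hk : 1 ≤ k) : ∀ (m : ℕ) (X : Multigraph), X.nV = m → EC X 2 → Triv2 X →
    X.nE = X.nV + k → W k X := by
  intro m
  induction m with
  | zero =>
    intro X hm hX _ hE
    have : Nonempty X.E := Fintype.card_pos_iff.1 (by change 0 < X.nE; omega)
    obtain ⟨e⟩ := this
    have : 0 < X.nV := Fintype.card_pos_iff.2 ⟨X.src e⟩
    omega
  | succ m ih =>
    intro X hm hX hT hE
    by_cases h3 : EC X 3
    · exact T1 hk h3 hE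
    · obtain ⟨A, hA⟩ := two_cut hX h3
      obtain ⟨B, hB, hBd⟩ := hT A hA
      rw [← hB] at hA
      obtain ⟨⟨x, hx⟩, hB2⟩ := cut_nontriv (card_pos.1 (by omega : 0 < (X.cutEdges B).card))
      have hd := hBd x hx
      have hxu : ({x} : Finset X.V) ≠ univ := by
        intro h
        apply hB2
        ext y
        have : y ∈ ({x} : Finset X.V) := by rw [h]; simp
        rw [mem_singleton] at this
        subst this
        simp [hx]
      have hc := hX {x} (by simp) hxu
      have hc' := cut_single_le X x
      obtain ⟨e, f, hef, hcut⟩ := card_eq_two.1 (by omega : (X.cutEdges {x}).card = 2)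
      obtain ⟨y, hxy, hey⟩ := ends_cut_single (x := x) (e := e) (by rw [hcut]; simp)
      obtain ⟨u, hxu, hfu⟩ := ends_cut_single (x := x) (e := f) (by rw [hcut]; simp)
      have hinc := deg2_inc hd hc
      have hl : X.src e ≠ X.tgt e := nonloop_of_cut (A := {x}) (by rw [hcut]; simp)
      let c := Con.contract X e
      have h1 := c.card_V hl
      have h2 := c.card_E1
      obtain ⟨f', hf'⟩ := c.rsurj f hef.symm
      have hW := ih (X.contract e) (by omega) (c.ec hX) (triv2_contract c hl hT) (by omega)
      obtain ⟨s⟩ := sub_of_deg2 c f' hf' hef hey hfu hxy hxu (by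
        intro g h1 h2
        constructor
        · intro h
          have := hinc g (Or.inl h)
          rw [hcut] at this
          simp [h1, h2] at this
        · intro h
          have := hinc g (Or.inr h)
          rw [hcut] at this
          simp [h1, h2] at this)
      exact W_iso s.to_isIso (W_sub hW f')

theorem a_fwd {k : ℕ} {X : Multigraph} (hX : EC X 2) (hW : W k X) : Triv2 X := by
  obtain ⟨D, w, hD, hz, hi⟩ := hW
  obtain ⟨c⟩ := Con.of_isIso hi
  exact iso_triv2 c (sd_triv2 D w (ec3_iff.2 hD.2.2.1) (c.ec hX))

def Good (k : ℕ) (X : Multigraph) : Prop := ∃ Gd, EquivalentGraphs X Gd ∧ W k Gd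

lemma good_of_shift {k : ℕ} {X Y : Multigraph} (h : IsShiftOf X Y) (hY : Good k Y) : Good k X := by
  obtain ⟨Gd, h1, h2⟩ := hY
  exact ⟨Gd, Relation.ReflTransGen.head h h1, h2⟩

lemma good_sub {k : ℕ} {X K : Multigraph} (h : EquivalentGraphs X K) (hK : W k K) :
    EC X 2 → ∀ f, Good k (sub X f) := by
  induction h using Relation.ReflTransGen.head_induction_on with
  | refl => exact fun _ f => ⟨_, Relation.ReflTransGen.refl, W_sub hK f⟩
  | @head X X2 hs _ ih =>
    intro hX f
    have ih := ih (shift_ec2 hs hX)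
    obtain ⟨H, e, e', A, hne, hA, ⟨c⟩, ⟨d⟩⟩ := shift_data hs
    have hH : EC H 2 := ec2_expand' c hX (C := A) (g := e) (by rw [hA, Finset.pair_comm]) hne
    have hA' := pair_iff.1 hA
    have hfe' : c.r f ≠ e' := c.rnot f
    by_cases hfe : c.r f = e
    · obtain ⟨s⟩ := subLift1 c f
      obtain ⟨f2, hf2⟩ := d.rsurj e' hne.symm
      obtain ⟨t⟩ := subLift1 d f2
      rw [hfe] at s
      rw [hf2] at t
      obtain ⟨A1, hA1⟩ := sub_cut_swap hne.symm hA'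
      obtain ⟨A2, hA2⟩ := sub_cut_swap (f := e') hne (fun x => (hA' x).trans or_comm)
      have s1 : IsShiftOf (sub X f) H := mk_shift (by simp) hA1 (sub_ec2 e hH) s (subNone H e)
      have s2 : IsShiftOf H (sub X2 f2) :=
        mk_shift (by simp) (fun x => (hA2 x).trans or_comm) (sub_ec2 e' hH) (subNone H e') t
      exact good_of_shift s1 (good_of_shift s2 (ih f2))
    · obtain ⟨f2, hf2⟩ := d.rsurj (c.r f) hfe
      obtain ⟨s⟩ := subLift1 c f
      obtain ⟨t⟩ := subLift1 d f2
      rw [hf2] at t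
      obtain ⟨A1, hA1⟩ := sub_cut_some (c.r f) A
      have s1 : IsShiftOf (sub X f) (sub X2 f2) := by
        refine mk_shift (by simpa using hne) (A := A1) ?_ (sub_ec2 _ hH) s t
        intro x
        rw [hA1]
        constructor
        · rintro ⟨y, hy, rfl⟩
          rcases (hA' y).1 hy with rfl | rfl
          · exact Or.inl rfl
          · exact Or.inr rfl
        · rintro (rfl | rfl)
          · exact ⟨e, (hA' e).2 (Or.inl rfl), rfl⟩
          · exact ⟨e', (hA' e').2 (Or.inr rfl), rfl⟩
      exact good_of_shift s1 (ih f2)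

theorem b_main {k : ℕ} (hk : 1 ≤ k) : ∀ (m : ℕ) (X : Multigraph), X.nV = m → EC X 2 →
    X.nE = X.nV + k → Good k X := by
  intro m
  induction m with
  | zero =>
    intro X hm hX hE
    have : Nonempty X.E := Fintype.card_pos_iff.1 (by change 0 < X.nE; omega)
    obtain ⟨e⟩ := this
    have : 0 < X.nV := Fintype.card_pos_iff.2 ⟨X.src e⟩
    omega
  | succ m ih =>
    intro X hm hX hE
    by_cases h3 : EC X 3
    · exact ⟨X, Relation.ReflTransGen.refl, T1 hk h3 hE⟩
    · obtain ⟨A, hA⟩ := two_cut hX h3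
      obtain ⟨e, f, hef, hcut⟩ := card_eq_two.1 hA
      have hl : X.src e ≠ X.tgt e := nonloop_of_cut (A := A) (by rw [hcut]; simp)
      let c := Con.contract X e
      have h1 := c.card_V hl
      have h2 := c.card_E1
      obtain ⟨f', hf'⟩ := c.rsurj f hef.symm
      obtain ⟨K, hK, hW⟩ := ih (X.contract e) (by omega) (c.ec hX) (by omega)
      have hg := good_sub hK hW (c.ec hX) f'
      obtain ⟨t⟩ := subLift1 c f'
      rw [hf'] at t
      obtain ⟨A1, hA1⟩ := sub_cut_swap (f := f) hef (fun x => (pair_iff.1 hcut x).trans or_comm)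
      exact good_of_shift
        (mk_shift (by simp) (fun x => (hA1 x).trans or_comm) (sub_ec2 f hX) (subNone X f) t) hg

lemma equiv_back {P : Multigraph → Prop} (hP : ∀ X Y, IsShiftOf X Y → P Y → P X) {X Y : Multigraph}
    (h : EquivalentGraphs X Y) (hY : P Y) : P X := by
  induction h using Relation.ReflTransGen.head_induction_on with
  | refl => exact hY
  | head hs _ ih => exact hP _ _ hs ih

theorem c_main {k : ℕ} (hk : 1 ≤ k) {G Gd D : Multigraph} {w : D.E → ℕ} (hG : EC G 2)
    (hE : G.nE = G.nV + k) (hno : ¬ W k G) (heq : EquivalentGraphs G Gd) (hD : memDk k D)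
    (hs : IsWeakSubdivision Gd D w) : ¬ BalancedWeights w ∧ ∃ e, w e = 0 := by
  obtain ⟨hz, hi⟩ := hs
  have hGd : EC Gd 2 := by
    clear hi hz hno hE
    induction heq with
    | refl => exact hG
    | tail _ h ih => exact shift_ec2 h ih
  obtain ⟨c⟩ := Con.of_isIso hi
  obtain ⟨c'⟩ := Con.of_isIso (Con.isIso_symm hi)
  have hD3 := ec3_iff.2 hD.2.2.1
  have hzero : ∃ e, w e = 0 := by
    by_contra hne
    have hw : ∀ e, 1 ≤ w e := by
      intro e
      by_contra h
      exact hne ⟨e, by omega⟩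
    apply hno
    have hI : Inv2 Gd := by
      refine ⟨hGd, fun v => ?_, iso_triv2 c (sd_triv2 D w hD3 (c.ec hGd))⟩
      rw [← c.deg_iso]
      exact deg_le3 D w hw hD.2.1 _
    have := equiv_back (P := Inv2) (fun X Y h hY => shift_inv2 (shift_symm h) hY) heq hI
    exact a_back hk _ G rfl hG this.2.2 hE
  refine ⟨fun hb => ?_, hzero⟩
  obtain ⟨e, he⟩ := hzero
  apply hno
  have h3 : EC Gd 3 := c'.ec (sd_ec3 D w hD3 (fun f => by have := hb f e; omega))
  exact T1 hk (equiv_back (P := fun X => EC X 3) (fun X Y h hY => shift_ec3 (shift_symm h) hY) heq h3) hE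

end BG

/-- (a) a bridgeless G has a weak distillation in 𝒟_k iff every 2-bond of
G is trivial (its two edges belong to one chain, i.e. one side of the bond consists of
degree-2 vertices); (b) G is equivalent to some G† with a weak distillation in 𝒟_k;
(c) if G has no weak distillation in 𝒟_k, then every such G† is imbalanced and has a
zero chain with respect to each of its weak distillations in 𝒟_k. -/
theorem bridgeless_graphs_and_Dk (n k : ℕ) (hn : 1 ≤ n) (hk : 1 ≤ k)
    (G : Multigraph) (hG : memG G n (n + k)) (hbl : G.Bridgeless) :
    ((∃ (D : Multigraph) (w : D.E → ℕ), memDk k D ∧ IsWeakSubdivision G D w) ↔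
      (∀ F : Finset G.E, G.IsBond F → F.card = 2 →
        ∃ A : Finset G.V, A.Nonempty ∧ A ≠ Finset.univ ∧ F = G.cutEdges A ∧
          ∀ v ∈ A, G.deg v = 2)) ∧
    (∃ Gd : Multigraph, EquivalentGraphs G Gd ∧
      ∃ (D : Multigraph) (w : D.E → ℕ), memDk k D ∧ IsWeakSubdivision Gd D w) ∧
    ((¬ ∃ (D : Multigraph) (w : D.E → ℕ), memDk k D ∧ IsWeakSubdivision G D w) →
      ∀ Gd : Multigraph, EquivalentGraphs G Gd →
        ∀ (D : Multigraph) (w : D.E → ℕ), memDk k D → IsWeakSubdivision Gd D w →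
          ¬ BalancedWeights w ∧ ∃ e : D.E, w e = 0) := by
  obtain ⟨hV, hE, hC⟩ := hG
  have h2 := BG.ec2_of hC hbl
  have hEV : G.nE = G.nV + k := by omega
  refine ⟨⟨fun h => ?_, fun h => ?_⟩, ?_, ?_⟩
  · exact (BG.triv2_iff h2).1 (BG.a_fwd (k := k) h2 h)
  · exact BG.a_back hk _ G rfl h2 ((BG.triv2_iff h2).2 h) hEV
  · exact BG.b_main hk _ G rfl h2 hEV
  · intro hno Gd heq D w hD hs
    exact BG.c_main hk h2 hEV hno heq hD hs
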